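/- arXiv:1003.1697 — 4 statements merged into one kernel-verified Lean document; each statement's English description precedes it below -/
import Mathlib

section
/- Let Ω be a domain in ℝⁿ and let x, y ∈ Ω be points with ‖x−y‖ ≤ max{dist(x,∂Ω), dist(y,∂Ω)}. Then for every α ∈ (0,1], ∫_{[x,y]} dist(z,∂Ω)^{α−1} ds(z) ≤ (1/α)·‖x−y‖^α, where the integral is the line integral with respect to arc length along the segment [x,y]. -/
/-!
If `d = ‖x - y‖ ≤ dist(x, ∂Ω)`, then since `z ↦ dist(z, ∂Ω)` is `1`-Lipschitz, the point
`x + t (y - x)` has distance at least `(1 - t) d` from the boundary. As `α - 1 ≤ 0`, the integrand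
is at most `(1 - t)^(α - 1) d^α`, whose integral over `[0, 1]` is `d^α / α`
(`segInt_le_of_le_bdist`). The case `d ≤ dist(y, ∂Ω)` follows by reversing the segment
(`segInt_symm`).
-/

open MeasureTheory Set Filter ENNReal NNReal

noncomputable section

/-- `ℝⁿ` equipped with the uniform norm `‖x‖ = max_i |x i|`. -/
abbrev Eu (n : ℕ) : Type := Fin n → ℝ

variable {n : ℕ}

/-- The closed cube `Q(x,r)` with center `x` and `diam Q = 2r`
(the closed ball of radius `r` in the uniform norm). -/
def cube (x : Eu n) (r : ℝ) : Set (Eu n) := Metric.closedBall x r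

/-- `dist(z, ∂Ω)`, the distance from `z` to the boundary of `Ω`. -/
def bdist (Ω : Set (Eu n)) (z : Eu n) : ℝ := Metric.infDist z (frontier Ω)

/-- The distance between two sets. -/
def setDistS (A B : Set (Eu n)) : ℝ := sInf {d : ℝ | ∃ a ∈ A, ∃ b ∈ B, d = dist a b}

/-- The line integral `∫_{[x,y]} ρ(z) ds(z)` of `ρ` over the segment `[x,y]`
with respect to arc length. -/
def segInt (ρ : Eu n → ℝ) (x y : Eu n) : ℝ :=
  ∫ t in (0:ℝ)..1, ρ (x + t • (y - x)) * ‖y - x‖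

/-- The set of subhyperbolic lengths `∫_γ dist(z,∂Ω)^{α-1} ds(z)` of rectifiable curves in `Ω`
joining `x` to `y`; rectifiable curves are encoded by their arc-length parametrizations,
i.e. `1`-Lipschitz maps `γ : [0,L] → Ω`. -/
def subLenSet (Ω : Set (Eu n)) (α : ℝ) (x y : Eu n) : Set ℝ :=
  {d : ℝ | ∃ (L : ℝ) (γ : ℝ → Eu n), 0 ≤ L ∧
    LipschitzOnWith 1 γ (Icc 0 L) ∧ γ 0 = x ∧ γ L = y ∧
    (∀ s ∈ Icc (0:ℝ) L, γ s ∈ Ω) ∧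
    IntervalIntegrable (fun s => bdist Ω (γ s) ^ (α - 1)) volume 0 L ∧
    d = ∫ s in (0:ℝ)..L, bdist Ω (γ s) ^ (α - 1)}

/-- The subhyperbolic metric `d_{α,Ω}(x,y)`. -/
def dSub (Ω : Set (Eu n)) (α : ℝ) (x y : Eu n) : ℝ := sInf (subLenSet Ω α x y)

/-- The metric `d̃_{α,Ω}(x,y) = d_{α,Ω}(x,y) + ‖x-y‖^α`. -/
def dTil (Ω : Set (Eu n)) (α : ℝ) (x y : Eu n) : ℝ := dSub Ω α x y + ‖x - y‖ ^ α

/-- The half-open segment `(x,a]`. -/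
def segOC (x a : Eu n) : Set (Eu n) := {z | ∃ t ∈ Set.Ioc (0:ℝ) 1, z = x + t • (a - x)}

/-- `x` is `Q`-visible in `Ω`: for each `y ∈ Q` the half-open segment `(x,y]` lies in `Ω`. -/
def QVisible (Ω Q : Set (Eu n)) (x : Eu n) : Prop :=
  ∀ y ∈ Q, ∀ t ∈ Set.Ioc (0:ℝ) 1, x + t • (y - x) ∈ Ω

/-- `O_ε(∂Ω)`, the ε-neighborhood of `∂Ω` in `Ω`. -/
def Oeps (Ω : Set (Eu n)) (ε : ℝ) : Set (Eu n) := {x ∈ Ω | bdist Ω x < ε}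

lemma segInt_symm (ρ : Eu n → ℝ) (x y : Eu n) : segInt ρ x y = segInt ρ y x := by
  unfold segInt
  have h := intervalIntegral.integral_comp_sub_left (a := 0) (b := 1)
    (fun t : ℝ => ρ (x + t • (y - x)) * ‖y - x‖) 1
  rw [sub_self, sub_zero] at h
  rw [← h]
  refine intervalIntegral.integral_congr fun t _ => ?_
  have e : x + (1 - t) • (y - x) = y + t • (x - y) := by module
  simp only [e, norm_sub_rev y x]

lemma bdist_segment_ge (Ω : Set (Eu n)) {x y : Eu n} (h : ‖x - y‖ ≤ bdist Ω x) {t : ℝ}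
    (ht : 0 ≤ t) : (1 - t) * ‖x - y‖ ≤ bdist Ω (x + t • (y - x)) := by
  have h1 : bdist Ω x ≤ bdist Ω (x + t • (y - x)) + dist x (x + t • (y - x)) :=
    Metric.infDist_le_infDist_add_dist
  rw [dist_self_add_right, norm_smul, Real.norm_of_nonneg ht, norm_sub_rev y x] at h1
  linarith

lemma intervalIntegrable_one_sub_rpow {α : ℝ} (hα : 0 < α) :
    IntervalIntegrable (fun t : ℝ => (1 - t) ^ (α - 1)) volume 0 1 := by
  have h := (intervalIntegral.intervalIntegrable_rpow' (a := 0) (b := 1)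
    (show -1 < α - 1 by linarith)).comp_sub_left 1
  simpa using h.symm

lemma integral_one_sub_rpow {α : ℝ} (hα : 0 < α) :
    ∫ t in (0:ℝ)..1, (1 - t) ^ (α - 1) = 1 / α := by
  rw [intervalIntegral.integral_comp_sub_left (fun t : ℝ => t ^ (α - 1)) 1, sub_self, sub_zero,
    integral_rpow (Or.inl (by linarith))]
  simp [hα.ne']

/-- The estimate when the maximum of the two boundary distances is attained at the endpoint `x`.
Integrability of the left-hand integrand is not needed: it is nonnegative and dominated by an
integrable function, so a zero junk value would also obey the bound. -/
lemma segInt_le_of_le_bdist (Ω : Set (Eu n)) {x y : Eu n} (h : ‖x - y‖ ≤ bdist Ω x)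
    {α : ℝ} (hα : α ∈ Set.Ioc (0:ℝ) 1) :
    segInt (fun z => bdist Ω z ^ (α - 1)) x y ≤ (1/α) * ‖x - y‖ ^ α := by
  obtain ⟨h0, h1⟩ := hα
  rcases (norm_nonneg (x - y)).eq_or_lt with hd | hd
  · rw [← hd, Real.zero_rpow h0.ne']
    simp [segInt, norm_sub_rev y x, ← hd]
  have hint := (intervalIntegrable_one_sub_rpow h0).mul_const (‖x - y‖ ^ α)
  rw [← integral_one_sub_rpow h0, ← intervalIntegral.integral_mul_const]
  unfold segInt
  rw [intervalIntegral.integral_of_le zero_le_one, intervalIntegral.integral_of_le zero_le_one,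
    integral_Ioc_eq_integral_Ioo, integral_Ioc_eq_integral_Ioo]
  refine integral_mono_of_nonneg (Eventually.of_forall fun t => ?_) ?_ ?_
  · exact mul_nonneg (Real.rpow_nonneg Metric.infDist_nonneg _) (norm_nonneg _)
  · exact ((intervalIntegrable_iff_integrableOn_Ioc_of_le zero_le_one).1 hint).mono_set
      Ioo_subset_Ioc_self
  -- The open interval matters here: at `t = 1` the lower bound `(1 - t) * ‖x - y‖` vanishes.
  refine (ae_restrict_iff' measurableSet_Ioo).2 (Eventually.of_forall fun t ht => ?_)
  have ht' : 0 < 1 - t := sub_pos.2 ht.2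
  calc bdist Ω (x + t • (y - x)) ^ (α - 1) * ‖y - x‖
      ≤ ((1 - t) * ‖x - y‖) ^ (α - 1) * ‖x - y‖ := by
        rw [norm_sub_rev y x]
        exact mul_le_mul_of_nonneg_right (Real.rpow_le_rpow_of_nonpos (mul_pos ht' hd)
          (bdist_segment_ge Ω h ht.1.le) (by linarith)) hd.le
    _ = (1 - t) ^ (α - 1) * ‖x - y‖ ^ α := by
        rw [Real.mul_rpow ht'.le hd.le, mul_assoc, ← Real.rpow_add_one hd.ne', sub_add_cancel]

/-- Lemma 2.1.  Let `Ω` be a domain in `ℝⁿ` and let `x, y ∈ Ω` with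
`‖x−y‖ ≤ max{dist(x,∂Ω), dist(y,∂Ω)}`.  Then for every `α ∈ (0,1]`,
`∫_{[x,y]} dist(z,∂Ω)^{α−1} ds(z) ≤ (1/α)·‖x−y‖^α`. -/
theorem statement2 (n : ℕ) (Ω : Set (Eu n)) (hΩopen : IsOpen Ω) (hΩconn : IsConnected Ω)
    (x y : Eu n) (hx : x ∈ Ω) (hy : y ∈ Ω)
    (hxy : ‖x - y‖ ≤ max (bdist Ω x) (bdist Ω y))
    (α : ℝ) (hα : α ∈ Set.Ioc (0:ℝ) 1) :
    segInt (fun z => bdist Ω z ^ (α - 1)) x y ≤ (1/α) * ‖x - y‖ ^ α := by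
  rcases le_max_iff.1 hxy with h | h
  · exact segInt_le_of_le_bdist Ω h hα
  · rw [segInt_symm, norm_sub_rev]
    rw [norm_sub_rev] at h
    exact segInt_le_of_le_bdist Ω h hα
end
end

section
/- Let Ω be a domain in ℝⁿ, let x, y ∈ Ω and let α ∈ (0,1]. Then for every chain of cubes {Q_i : i = 1,…,m} joining x to y in Ω, d̃_{α,Ω}(x,y) ≤ (1 + 2/α)·Σ_{i=1}^m (diam Q_i)^α. -/
/-!
Two points of a cube `Q(c,r) ⊆ Ω` are joined inside it by going straight to the center `c` and back
out.  A point that has travelled a length `s` from a point of `Q` towards `c` is at distance at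
least `s` from `∂Ω`, so each of the two segments has subhyperbolic length at most
`∫₀ʳ s^(α-1) ds = r^α/α`, and any two points of `Q` are joined at cost at most
`(2/α) (diam Q)^α` (`exists_mem_subLenSet_of_mem_cube`).

In a chain, choose a point in the intersection of each two consecutive cubes; concatenating curves
(`exists_mem_subLenSet_of_chain`, by induction on the number of cubes) bounds `d_{α,Ω}(x,y)` by
`(2/α) Σ (diam Q_i)^α`.  The term `‖x-y‖^α` is at most `Σ (diam Q_i)^α` by the triangle inequality
and the subadditivity of `t ↦ t^α`.
-/

open MeasureTheory Set Filter ENNReal NNReal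

noncomputable section

variable {n : ℕ}

/-- A chain of cubes `Q_i = Q(c i, r i)`, `i = 0,…,m`, joining `x` to `y` in `Ω`. -/
def IsCubeChain (Ω : Set (Eu n)) (x y : Eu n) (m : ℕ)
    (c : Fin (m+1) → Eu n) (r : Fin (m+1) → ℝ) : Prop :=
  (∀ i, 0 < r i) ∧ (∀ i, cube (c i) (r i) ⊆ Ω) ∧
  x ∈ cube (c 0) (r 0) ∧ y ∈ cube (c (Fin.last m)) (r (Fin.last m)) ∧
  ∀ i : Fin m, (cube (c i.castSucc) (r i.castSucc) ∩ cube (c i.succ) (r i.succ)).Nonempty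

/-- The covering multiplicity of a finite family of cubes is at most `M`. -/
def multBdd {m : ℕ} (c : Fin m → Eu n) (r : Fin m → ℝ) (M : ℕ) : Prop :=
  ∀ z : Eu n, {i | z ∈ cube (c i) (r i)}.ncard ≤ M

lemma bdist_nonneg (Ω : Set (Eu n)) (z : Eu n) : 0 ≤ bdist Ω z := Metric.infDist_nonneg

/-- Lengths are nonnegative, so the infimum defining `dSub` is bounded below. -/
lemma bddBelow_subLenSet (Ω : Set (Eu n)) (α : ℝ) (x y : Eu n) :
    BddBelow (subLenSet Ω α x y) := by
  refine ⟨0, ?_⟩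
  rintro d ⟨L, γ, hL, -, -, -, -, -, rfl⟩
  exact intervalIntegral.integral_nonneg hL fun s _ => Real.rpow_nonneg (bdist_nonneg _ _) _

lemma subLenSet_symm {Ω : Set (Eu n)} {α : ℝ} {x y : Eu n} {d : ℝ}
    (h : d ∈ subLenSet Ω α x y) : d ∈ subLenSet Ω α y x := by
  obtain ⟨L, γ, hL, hlip, h0, h1, hΩ, hint, rfl⟩ := h
  have hmem : ∀ s ∈ Icc (0:ℝ) L, L - s ∈ Icc (0:ℝ) L := fun s hs =>
    ⟨by linarith [hs.2], by linarith [hs.1]⟩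
  refine ⟨L, fun s => γ (L - s), hL, ?_, by simpa using h1, by simpa using h0,
    fun s hs => hΩ _ (hmem s hs), ?_, ?_⟩
  · refine LipschitzOnWith.of_dist_le_mul fun s hs t ht => ?_
    have := hlip.dist_le_mul _ (hmem s hs) _ (hmem t ht)
    rwa [dist_sub_left] at this
  · simpa using (hint.comp_sub_left L).symm
  · simp [intervalIntegral.integral_comp_sub_left (fun s => bdist Ω (γ s) ^ (α - 1)) L]

/-- Lengths add up under concatenation of curves. -/
lemma subLenSet_trans {Ω : Set (Eu n)} {α : ℝ} {x y z : Eu n} {d e : ℝ}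
    (h : d ∈ subLenSet Ω α x y) (h' : e ∈ subLenSet Ω α y z) :
    d + e ∈ subLenSet Ω α x z := by
  obtain ⟨L, γ, hL, hlip, h0, h1, hΩ, hint, rfl⟩ := h
  obtain ⟨M, δ, hM, hlip', h0', h1', hΩ', hint', rfl⟩ := h'
  set η : ℝ → Eu n := fun s => if s ≤ L then γ s else δ (s - L) with hη
  have hη1 : ∀ s, s ≤ L → η s = γ s := fun s hs => by simp [hη, hs]
  have hη2 : ∀ s, L ≤ s → η s = δ (s - L) := fun s hs => by
    rcases hs.eq_or_lt with rfl | hs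
    · simp [hη, h1, h0']
    · simp [hη, not_le.2 hs]
  have hmem : ∀ s ∈ Icc (0:ℝ) (L + M), L ≤ s → s - L ∈ Icc (0:ℝ) M := fun s hs hs' =>
    ⟨by linarith, by linarith [hs.2]⟩
  have hint1 : IntervalIntegrable (fun s => bdist Ω (η s) ^ (α - 1)) volume 0 L := by
    refine hint.congr fun s hs => ?_
    rw [uIoc_of_le hL] at hs
    simp only [hη1 s hs.2]
  have hint2 : IntervalIntegrable (fun s => bdist Ω (η s) ^ (α - 1)) volume L (L + M) := by
    have h2 := hint'.comp_sub_right L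
    rw [zero_add, add_comm M L] at h2
    refine h2.congr fun s hs => ?_
    rw [uIoc_of_le (by linarith)] at hs
    simp only [hη2 s hs.1.le]
  have hI1 : ∫ s in (0:ℝ)..L, bdist Ω (γ s) ^ (α - 1) =
      ∫ s in (0:ℝ)..L, bdist Ω (η s) ^ (α - 1) := by
    refine intervalIntegral.integral_congr fun s hs => ?_
    rw [uIcc_of_le hL] at hs
    simp only [hη1 s hs.2]
  have hI2 : ∫ s in (0:ℝ)..M, bdist Ω (δ s) ^ (α - 1) =
      ∫ s in L..(L + M), bdist Ω (η s) ^ (α - 1) := by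
    have h2 : ∫ s in L..(L + M), bdist Ω (η s) ^ (α - 1) =
        ∫ s in L..(L + M), bdist Ω (δ (s - L)) ^ (α - 1) := by
      refine intervalIntegral.integral_congr fun s hs => ?_
      rw [uIcc_of_le (by linarith)] at hs
      simp only [hη2 s hs.1]
    rw [h2, intervalIntegral.integral_comp_sub_right (fun s => bdist Ω (δ s) ^ (α - 1)) L]
    simp
  -- The Lipschitz estimate across the junction `L`; the remaining case follows by symmetry.
  have key : ∀ s ∈ Icc (0:ℝ) (L + M), ∀ t ∈ Icc (0:ℝ) (L + M), s ≤ t →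
      dist (η s) (η t) ≤ t - s := by
    intro s hs t ht hst
    rcases le_total t L with htL | htL
    · have := hlip.dist_le_mul s ⟨hs.1, hst.trans htL⟩ t ⟨ht.1, htL⟩
      rw [hη1 s (hst.trans htL), hη1 t htL]
      simpa [Real.dist_eq, abs_sub_comm s t, abs_of_nonneg (sub_nonneg.2 hst)] using this
    · rcases le_total s L with hsL | hsL
      · have h3 := hlip.dist_le_mul s ⟨hs.1, hsL⟩ L ⟨hL, le_rfl⟩
        have h4 := hlip'.dist_le_mul 0 ⟨le_rfl, hM⟩ (t - L) (hmem t ht htL)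
        rw [hη1 s hsL, hη2 t htL]
        rw [h1, NNReal.coe_one, one_mul, Real.dist_eq, abs_sub_comm,
          abs_of_nonneg (sub_nonneg.2 hsL)] at h3
        rw [h0', NNReal.coe_one, one_mul, Real.dist_eq, zero_sub, abs_neg,
          abs_of_nonneg (sub_nonneg.2 htL)] at h4
        linarith [dist_triangle (γ s) y (δ (t - L))]
      · have := hlip'.dist_le_mul _ (hmem s hs hsL) _ (hmem t ht htL)
        rw [hη2 s hsL, hη2 t htL]
        rwa [dist_sub_right, NNReal.coe_one, one_mul, Real.dist_eq, abs_sub_comm,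
          abs_of_nonneg (sub_nonneg.2 hst)] at this
  refine ⟨L + M, η, by linarith, ?_, by rw [hη1 0 hL, h0], ?_, ?_, hint1.trans hint2, ?_⟩
  · refine LipschitzOnWith.of_dist_le_mul fun s hs t ht => ?_
    rw [NNReal.coe_one, one_mul, Real.dist_eq]
    rcases le_total s t with hst | hst
    · rw [abs_sub_comm]
      exact (key s hs t ht hst).trans (le_abs_self _)
    · rw [dist_comm]
      exact (key t ht s hs hst).trans (le_abs_self _)
  · rw [hη2 _ (by linarith), add_sub_cancel_left, h1']
  · intro s hs
    rcases le_total s L with hsL | hsL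
    · rw [hη1 s hsL]
      exact hΩ s ⟨hs.1, hsL⟩
    · rw [hη2 s hsL]
      exact hΩ' _ (hmem s hs hsL)
  · rw [hI1, hI2, intervalIntegral.integral_add_adjacent_intervals hint1 hint2]

/-- The frontier must be assumed nonempty: `bdist` is `0` otherwise. -/
lemma sub_dist_le_bdist {Ω : Set (Eu n)} (hΩ : IsOpen Ω) (hne : (frontier Ω).Nonempty)
    {c : Eu n} {r : ℝ} (hQ : cube c r ⊆ Ω) (z : Eu n) : r - dist z c ≤ bdist Ω z := by
  refine (Metric.le_infDist hne).2 fun w hw => ?_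
  have hwc : r < dist w c := by
    by_contra! hle
    have hwΩ : w ∈ Ω := hQ hle
    rw [hΩ.frontier_eq] at hw
    exact hw.2 hwΩ
  linarith [dist_triangle_left w c z]

/-- The segment from a point of a cube in `Ω` to the center has subhyperbolic length at most
`r^α/α`. -/
lemma exists_mem_subLenSet_center {Ω : Set (Eu n)} (hΩ : IsOpen Ω) {α : ℝ}
    (hα : α ∈ Ioc (0:ℝ) 1) {c a : Eu n} {r : ℝ} (hQ : cube c r ⊆ Ω) (ha : a ∈ cube c r) :
    ∃ d ∈ subLenSet Ω α a c, d ≤ r ^ α / α := by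
  have hα0 : 0 < α := hα.1
  have har : dist a c ≤ r := ha
  rcases eq_or_ne a c with rfl | hac
  · refine ⟨0, ⟨0, fun _ => a, le_rfl, ((LipschitzWith.const a).weaken zero_le_one).lipschitzOnWith, rfl, rfl,
      fun _ _ => hQ ha, by simp, by simp⟩, ?_⟩
    have : 0 ≤ r := dist_nonneg.trans har
    positivity
  set L : ℝ := dist a c with hLdef
  have hL : 0 < L := dist_pos.2 hac
  set γ : ℝ → Eu n := fun s => AffineMap.lineMap a c (s / L) with hγ
  have hnorm : dist a c = L := rfl
  have hlip : LipschitzWith 1 γ := by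
    refine LipschitzWith.of_dist_le_mul fun s t => le_of_eq ?_
    rw [hγ, dist_lineMap_lineMap, hnorm, NNReal.coe_one, one_mul, Real.dist_eq, ← _root_.sub_div,
      abs_div, abs_of_pos hL, div_mul_cancel₀ _ hL.ne', Real.dist_eq]
  have hdist : ∀ s ∈ Icc (0:ℝ) L, dist (γ s) c = L - s := by
    intro s hs
    have hs1 : 0 ≤ 1 - s / L := sub_nonneg.2 ((div_le_one hL).2 hs.2)
    rw [hγ, dist_lineMap_right, hnorm, Real.norm_of_nonneg hs1]
    field_simp
  -- In the degenerate case `∂Ω = ∅` the weight is `0 ^ (α - 1)`, which is `0`, or `1` if `α = 1`.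
  have hbound : ∀ s ∈ Ioc (0:ℝ) L, bdist Ω (γ s) ^ (α - 1) ≤ s ^ (α - 1) := by
    intro s hs
    rcases (frontier Ω).eq_empty_or_nonempty with he | hne
    · have h0 : bdist Ω (γ s) = 0 := by rw [bdist, he, Metric.infDist_empty]
      rcases hα.2.eq_or_lt with h1 | h1
      · simp [h1]
      · rw [h0, Real.zero_rpow (by linarith)]
        exact Real.rpow_nonneg hs.1.le _
    · refine Real.rpow_le_rpow_of_nonpos hs.1 ?_ (by linarith [hα.2])
      have := sub_dist_le_bdist hΩ hne hQ (γ s)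
      rw [hdist s ⟨hs.1.le, hs.2⟩] at this
      linarith
  have hpow : IntervalIntegrable (fun s : ℝ => s ^ (α - 1)) volume 0 L :=
    intervalIntegral.intervalIntegrable_rpow' (by linarith)
  have hmeas : Measurable fun s => bdist Ω (γ s) ^ (α - 1) :=
    ((Metric.continuous_infDist_pt _).comp hlip.continuous).measurable.pow_const _
  have hint : IntervalIntegrable (fun s => bdist Ω (γ s) ^ (α - 1)) volume 0 L := by
    refine hpow.mono_fun hmeas.aestronglyMeasurable ?_
    rw [uIoc_of_le hL.le]
    filter_upwards [ae_restrict_mem measurableSet_Ioc] with s hs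
    rw [Real.norm_of_nonneg (Real.rpow_nonneg (bdist_nonneg _ _) _),
      Real.norm_of_nonneg (Real.rpow_nonneg hs.1.le _)]
    exact hbound s hs
  refine ⟨_, ⟨L, γ, hL.le, hlip.lipschitzOnWith, by simp [hγ], by simp [hγ, hL.ne'],
    fun s hs => hQ ?_, hint, rfl⟩, ?_⟩
  · change dist (γ s) c ≤ r
    rw [hdist s hs]
    linarith [hs.1]
  · calc ∫ s in (0:ℝ)..L, bdist Ω (γ s) ^ (α - 1)
        ≤ ∫ s in (0:ℝ)..L, s ^ (α - 1) :=
          intervalIntegral.integral_mono_on_of_le_Ioo hL.le hint hpow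
            fun s hs => hbound s ⟨hs.1, hs.2.le⟩
      _ = L ^ α / α := by
          rw [integral_rpow (Or.inl (by linarith)), sub_add_cancel, Real.zero_rpow hα0.ne',
            sub_zero]
      _ ≤ r ^ α / α := by gcongr

lemma exists_mem_subLenSet_of_mem_cube {Ω : Set (Eu n)} (hΩ : IsOpen Ω) {α : ℝ}
    (hα : α ∈ Ioc (0:ℝ) 1) {c a b : Eu n} {r : ℝ} (hr : 0 < r) (hQ : cube c r ⊆ Ω)
    (ha : a ∈ cube c r) (hb : b ∈ cube c r) :
    (∃ d ∈ subLenSet Ω α a b, d ≤ 2 / α * (2 * r) ^ α) ∧ ‖a - b‖ ^ α ≤ (2 * r) ^ α := by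
  have hα0 : 0 < α := hα.1
  constructor
  · obtain ⟨d, hd, hd'⟩ := exists_mem_subLenSet_center hΩ hα hQ ha
    obtain ⟨e, he, he'⟩ := exists_mem_subLenSet_center hΩ hα hQ hb
    refine ⟨d + e, subLenSet_trans hd (subLenSet_symm he), ?_⟩
    calc d + e ≤ r ^ α / α + r ^ α / α := add_le_add hd' he'
      _ = 2 / α * r ^ α := by ring
      _ ≤ 2 / α * (2 * r) ^ α := by gcongr; linarith
  · have : ‖a - b‖ ≤ 2 * r := by
      rw [← dist_eq_norm]
      have h1 : dist a c ≤ r := ha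
      have h2 : dist b c ≤ r := hb
      linarith [dist_triangle_right a b c]
    gcongr

lemma exists_mem_subLenSet_of_chain {Ω : Set (Eu n)} (hΩ : IsOpen Ω) {α : ℝ}
    (hα : α ∈ Ioc (0:ℝ) 1) {x : Eu n} (m : ℕ) :
    ∀ (y : Eu n) (c : Fin (m+1) → Eu n) (r : Fin (m+1) → ℝ), IsCubeChain Ω x y m c r →
    (∃ d ∈ subLenSet Ω α x y, d ≤ 2 / α * ∑ i, (2 * r i) ^ α) ∧
      ‖x - y‖ ^ α ≤ ∑ i, (2 * r i) ^ α := by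
  induction m with
  | zero =>
    rintro y c r ⟨hr, hQ, hx, hy, -⟩
    simpa using exists_mem_subLenSet_of_mem_cube hΩ hα (hr 0) (hQ 0) hx hy
  | succ m ih =>
    rintro y c r ⟨hr, hQ, hx, hy, hi⟩
    obtain ⟨z, hz, hz'⟩ := hi (Fin.last m)
    obtain ⟨⟨d, hd, hd'⟩, hxz⟩ := ih z (fun i => c i.castSucc) (fun i => r i.castSucc)
      ⟨fun i => hr _, fun i => hQ _, hx, hz, fun i => hi i.castSucc⟩
    obtain ⟨⟨e, he, he'⟩, hzy⟩ :=
      exists_mem_subLenSet_of_mem_cube hΩ hα (hr (Fin.last (m+1))) (hQ (Fin.last (m+1))) hz' hy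
    rw [Fin.sum_univ_castSucc]
    refine ⟨⟨d + e, subLenSet_trans hd he, ?_⟩, ?_⟩
    · rw [mul_add]
      exact add_le_add hd' he'
    · calc ‖x - y‖ ^ α ≤ (‖x - z‖ + ‖z - y‖) ^ α :=
            Real.rpow_le_rpow (norm_nonneg _) (norm_sub_le_norm_sub_add_norm_sub x z y) hα.1.le
        _ ≤ ‖x - z‖ ^ α + ‖z - y‖ ^ α :=
            Real.rpow_add_le_add_rpow (norm_nonneg _) (norm_nonneg _) hα.1.le hα.2
        _ ≤ _ := add_le_add hxz hzy


/-- Lemma 2.4.  Let `Ω` be a domain in `ℝⁿ`, `x, y ∈ Ω` and `α ∈ (0,1]`.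
Then for every chain of cubes `{Q_i}` joining `x` to `y` in `Ω`,
`d̃_{α,Ω}(x,y) ≤ (1 + 2/α)·Σ_i (diam Q_i)^α`. -/
theorem statement6 (n : ℕ) (Ω : Set (Eu n)) (hΩopen : IsOpen Ω) (hΩconn : IsConnected Ω)
    (x y : Eu n) (hx : x ∈ Ω) (hy : y ∈ Ω) (α : ℝ) (hα : α ∈ Set.Ioc (0:ℝ) 1)
    (m : ℕ) (c : Fin (m+1) → Eu n) (r : Fin (m+1) → ℝ)
    (hch : IsCubeChain Ω x y m c r) :
    dTil Ω α x y ≤ (1 + 2/α) * ∑ i, (2 * r i) ^ α := by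
  obtain ⟨⟨d, hd, hd'⟩, hxy⟩ := exists_mem_subLenSet_of_chain hΩopen hα m y c r hch
  have hle : dSub Ω α x y ≤ d := csInf_le (bddBelow_subLenSet Ω α x y) hd
  rw [dTil, add_mul, one_mul]
  linarith
end
end

section
/- Let Ω be a domain in ℝⁿ, let n < q ≤ p < ∞ and β = (q−n)/(q−1), and let F ∈ L¹_p(Ω) be a continuous function. Let x, y ∈ Ω and let Ch = {Q_1,…,Q_m} be a chain of cubes joining x to y in Ω with covering multiplicity M = M(Ch) < ∞. Then |F(x) − F(y)| ≤ C(n,q)·M^{1/q}·(Σ_{i=1}^m (diam Q_i)^β)^{1−1/q}·(∫_U ‖∇F(z)‖^q dz)^{1/q}, where U = ∪_{i=1}^m Q_i and C(n,q) depends only on n and q. -/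
/-!
The estimate follows from Morrey's inequality on each cube of the chain,
`|F u - F v| ≤ C (2r)^{1-n/q} (∫_Q ‖g‖^q)^{1/q}` for `u, v ∈ Q` (`morrey_cube`). Choosing a point in
each intersection `Q_i ∩ Q_{i+1}` and telescoping (`abs_sub_le_sum_of_chain`), Hölder's inequality
with exponents `q/(q-1)` and `q` produces the sum of `(2 r_i)^{(q-n)/(q-1)}`, and the covering
multiplicity bounds `∑_i ∫_{Q_i} ‖g‖^q` by `M ∫_U ‖g‖^q` (`sum_setIntegral_le`).

Morrey's inequality is proved directly from the weak formulation. Fix a smooth probability density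
`ψ` supported in `Q` and, for `x ∈ Q`, let `B(l) = ∫ F(z) l^n ψ(x + l(z - x)) dz` with `l ≥ 1`. By
convexity of `Q` these are averages of `F` over `Q`; `B(1) = ∫ F ψ` does not depend on `x`, while
`B(l) → F(x)` as `l → ∞` (`exists_average_close`). The kernel's derivative in `l` is the divergence
in `z` of `(z - x) l^{n-1} ψ(x + l(z - x))`, hence `B'(l) = -∑_i ∫ g_i (z - x)_i l^{n-1} ψ(…)`
(`hasDerivAt_average`, `integral_deriv_eq`). Hölder's inequality gives
`|B'(l)| ≤ D l^{n/q-2}` (`abs_integral_deriv_le`), which is integrable on `[1, ∞)` since `q > n`.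
Thus `|F(x) - ∫ F ψ| ≤ D / (1 - n/q)` for every `x ∈ Q` (`abs_sub_average_le`).
-/

open MeasureTheory Set Filter ENNReal NNReal

noncomputable section

variable {n : ℕ}

/-- `g` is the (first-order distributional) weak gradient of `F` on the open set `Ω`. -/
def HasWeakGradOn (F : Eu n → ℝ) (g : Eu n → Eu n) (Ω : Set (Eu n)) : Prop :=
  LocallyIntegrableOn F Ω volume ∧ LocallyIntegrableOn g Ω volume ∧
  ∀ φ : Eu n → ℝ, ContDiff ℝ (⊤ : ℕ∞) φ → HasCompactSupport φ → tsupport φ ⊆ Ω →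
    ∀ i : Fin n, ∫ x in Ω, F x * fderiv ℝ φ x (Pi.single i 1) =
      - ∫ x in Ω, g x i * φ x

/-- `F` is the continuous representative of an element of the homogeneous Sobolev space
`L¹_p(Ω)`, with weak gradient `g` and `‖∇F‖ ∈ L_p(Ω)`. -/
def ContL1pRep (Ω : Set (Eu n)) (p : ℝ) (F : Eu n → ℝ) (g : Eu n → Eu n) : Prop :=
  ContinuousOn F Ω ∧ HasWeakGradOn F g Ω ∧ IntegrableOn (fun z => ‖g z‖ ^ p) Ω volume

/-- `F` is the continuous representative of an element of `W¹_p(Ω) = L_p(Ω) ∩ L¹_p(Ω)`. -/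
def ContW1pRep (Ω : Set (Eu n)) (p : ℝ) (F : Eu n → ℝ) (g : Eu n → Eu n) : Prop :=
  ContL1pRep Ω p F g ∧ IntegrableOn (fun z => |F z| ^ p) Ω volume

/-- The norm `‖F‖_{W¹_p(Ω)} = ‖F‖_{L_p(Ω)} + ‖∇F‖_{L_p(Ω)}`. -/
def W1pNorm (Ω : Set (Eu n)) (p : ℝ) (F : Eu n → ℝ) (g : Eu n → Eu n) : ℝ :=
  (∫ z in Ω, |F z| ^ p) ^ (1/p) + (∫ z in Ω, ‖g z‖ ^ p) ^ (1/p)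

/-! ### Averages over shrinking homothetic copies of a mollifier -/

/-- A smooth probability density in the cube with height comparable to the inverse volume; this
height is what produces the scaling `r^{1-n/q}` in Morrey's inequality. -/
theorem exists_mollifier (c : Eu n) {r : ℝ} (hr : 0 < r) :
    ∃ ψ : Eu n → ℝ, ContDiff ℝ (⊤ : ℕ∞) ψ ∧ tsupport ψ ⊆ cube c r ∧ (∀ w, 0 ≤ ψ w) ∧
      (∀ w, ψ w ≤ (3 / (2 * r)) ^ n) ∧ ∫ w, ψ w = 1 := by
  let b : ContDiffBump c := ⟨r / 3, r / 2, by positivity, by linarith⟩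
  refine ⟨b.normed volume, b.contDiff_normed, ?_, b.nonneg_normed, fun w => ?_,
    b.integral_normed⟩
  · rw [b.tsupport_normed_eq]
    exact Metric.closedBall_subset_closedBall (by change r / 2 ≤ r; linarith)
  · refine (b.normed_le_div_measure_closedBall_rIn volume w).trans (le_of_eq ?_)
    have : (b.rIn : ℝ) = r / 3 := rfl
    rw [this, Measure.real, Real.volume_pi_closedBall _ (by positivity),
      ENNReal.toReal_ofReal (by positivity), Fintype.card_fin, one_div, ← inv_pow]
    congr 1
    field_simp

theorem mem_closedBall_of_dilate {x z : Eu n} {l R : ℝ} (hl : 0 < l)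
    (h : x + l • (z - x) ∈ Metric.closedBall x R) : ‖z - x‖ ≤ R / l := by
  rw [mem_closedBall_iff_norm, add_sub_cancel_left, norm_smul, Real.norm_of_nonneg hl.le] at h
  rw [le_div_iff₀ hl]; linarith

/-- The averages of `G` against the mollifiers `l^n ψ(x + l (z - x))` are differentiable in the
dilation factor `l`. All the differentiation falls on `ψ`, so continuity of `G` is enough. -/
theorem hasDerivAt_average {G ψ : Eu n → ℝ} (hG : Continuous G) (hψ : ContDiff ℝ (⊤ : ℕ∞) ψ)
    {x : Eu n} {R : ℝ} (hsupp : tsupport ψ ⊆ Metric.closedBall x R) {l₀ : ℝ} (hl₀ : 0 < l₀) :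
    HasDerivAt (fun l : ℝ => ∫ z, G z * (l ^ n * ψ (x + l • (z - x))))
      (∫ z, G z * (n * l₀ ^ (n - 1) * ψ (x + l₀ • (z - x)) +
        l₀ ^ n * fderiv ℝ ψ (x + l₀ • (z - x)) (z - x))) l₀ := by
  have hψ1 : Continuous ψ := hψ.continuous
  have hψ2 : Continuous (fderiv ℝ ψ) := hψ.continuous_fderiv (by simp)
  have hcont : Continuous (fun p : ℝ × Eu n => G p.2 * (n * p.1 ^ (n - 1) *
      ψ (x + p.1 • (p.2 - x)) + p.1 ^ n * fderiv ℝ ψ (x + p.1 • (p.2 - x)) (p.2 - x))) := by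
    have h1 : Continuous (fun p : ℝ × Eu n => fderiv ℝ ψ (x + p.1 • (p.2 - x)) (p.2 - x)) :=
      (hψ2.comp (by fun_prop)).clm_apply (by fun_prop)
    fun_prop
  obtain ⟨C, hC⟩ := (isCompact_Icc (a := l₀ / 2) (b := 2 * l₀)).prod
    (isCompact_closedBall x (2 * R / l₀)) |>.exists_bound_of_continuousOn hcont.continuousOn
  -- For `l > l₀ / 2` every rescaled mollifier lives in one fixed ball.
  have hzero : ∀ l ∈ Metric.ball l₀ (l₀ / 2), ∀ z, z ∉ Metric.closedBall x (2 * R / l₀) →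
      x + l • (z - x) ∉ tsupport ψ := by
    intro l hl z hz hmem
    apply hz
    rw [Metric.mem_ball, Real.dist_eq, abs_lt] at hl
    have hlpos : 0 < l := by linarith
    have h1 := mem_closedBall_of_dilate hlpos (hsupp hmem)
    have hR : 0 ≤ R := by
      have := hsupp hmem
      rw [Metric.mem_closedBall] at this
      exact dist_nonneg.trans this
    rw [mem_closedBall_iff_norm]
    refine h1.trans ?_
    rw [div_le_div_iff₀ hlpos hl₀]
    nlinarith
  have hball : Metric.ball l₀ (l₀ / 2) ∈ nhds l₀ := Metric.ball_mem_nhds _ (by positivity)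
  have hcF : ∀ l : ℝ, Continuous fun z => G z * (l ^ n * ψ (x + l • (z - x))) := by
    intro l; fun_prop
  refine (hasDerivAt_integral_of_dominated_loc_of_deriv_le (μ := volume)
    (F := fun l z => G z * (l ^ n * ψ (x + l • (z - x))))
    (F' := fun l z => G z * (n * l ^ (n - 1) * ψ (x + l • (z - x)) +
        l ^ n * fderiv ℝ ψ (x + l • (z - x)) (z - x)))
    (bound := (Metric.closedBall x (2 * R / l₀)).indicator fun _ => C)
    hball (Eventually.of_forall fun l => (hcF l).aestronglyMeasurable) ?_ ?_ ?_ ?_ ?_).2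
  · refine (hcF l₀).integrable_of_hasCompactSupport
      (HasCompactSupport.intro (isCompact_closedBall x (2 * R / l₀)) fun z hz => ?_)
    rw [image_eq_zero_of_notMem_tsupport
      (hzero l₀ (Metric.mem_ball_self (by positivity)) z hz)]
    simp
  · exact (hcont.comp (by fun_prop : Continuous fun z : Eu n => (l₀, z))).aestronglyMeasurable
  · refine Eventually.of_forall fun z l hl => ?_
    by_cases hz : z ∈ Metric.closedBall x (2 * R / l₀)
    · rw [indicator_of_mem hz]
      rw [Metric.mem_ball, Real.dist_eq, abs_lt] at hl
      exact hC (l, z) ⟨⟨by linarith, by linarith⟩, hz⟩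
    · rw [indicator_of_notMem hz]
      have h0 := hzero l hl z hz
      have h1 : fderiv ℝ ψ (x + l • (z - x)) = 0 := by
        by_contra hne
        exact h0 (support_fderiv_subset ℝ hne)
      rw [image_eq_zero_of_notMem_tsupport h0, h1]
      simp
  · rw [integrable_indicator_iff Metric.isClosed_closedBall.measurableSet]
    exact integrableOn_const (isCompact_closedBall _ _).measure_lt_top.ne
  · refine Eventually.of_forall fun z l _ => ?_
    have hd : HasFDerivAt ψ (fderiv ℝ ψ (x + l • (z - x))) (x + l • (z - x)) :=
      (hψ.differentiable (by simp) _).hasFDerivAt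
    have hline : HasDerivAt (fun l : ℝ => x + l • (z - x)) (z - x) l := by
      simpa using ((hasDerivAt_id l).smul_const (z - x)).const_add x
    exact ((hasDerivAt_pow n l).mul (hd.comp_hasDerivAt l hline)).const_mul (G z)

/-! ### Weak gradient and derivative of the averages -/

/-- The homothety with center `x` in the cube and ratio `1/l ≤ 1` maps the cube into itself, by
convexity. -/
theorem mem_cube_of_dilate {c x z : Eu n} {r l : ℝ} (hx : x ∈ cube c r) (hl : 1 ≤ l)
    (h : x + l • (z - x) ∈ cube c r) : z ∈ cube c r := by
  have hl0 : 0 < l := by linarith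
  have h1 : z = (1 - l⁻¹) • x + l⁻¹ • (x + l • (z - x)) := by
    rw [smul_add, smul_smul, inv_mul_cancel₀ hl0.ne']
    module
  rw [h1]
  exact convex_closedBall c r hx h (sub_nonneg.2 (inv_le_one_of_one_le₀ hl)) (by positivity)
    (by ring)

/-- The `l`-derivative of `l^n ψ(x + l (z - x))` is the divergence in `z` of the vector field
`(z - x) l^{n-1} ψ(x + l (z - x))`, so the definition of the weak gradient turns the derivative of
the average into an integral against `h`. For `l ≥ 1` the components of the field are supported in
the cube, by convexity. -/
theorem integral_deriv_eq (hn : 0 < n) {G ψ : Eu n → ℝ} {h : Eu n → Eu n} {c x : Eu n} {r : ℝ}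
    (hG : Continuous G)
    (hw : ∀ φ : Eu n → ℝ, ContDiff ℝ (⊤ : ℕ∞) φ → tsupport φ ⊆ cube c r → ∀ i : Fin n,
      ∫ z, G z * fderiv ℝ φ z (Pi.single i 1) = - ∫ z, h z i * φ z)
    (hx : x ∈ cube c r) (hψ : ContDiff ℝ (⊤ : ℕ∞) ψ) (hsupp : tsupport ψ ⊆ cube c r)
    {l : ℝ} (hl : 1 ≤ l) :
    ∫ z, G z * (n * l ^ (n - 1) * ψ (x + l • (z - x)) +
        l ^ n * fderiv ℝ ψ (x + l • (z - x)) (z - x)) =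
      - ∑ i, ∫ z, h z i * ((z i - x i) * (l ^ (n - 1) * ψ (x + l • (z - x)))) := by
  let φ : Fin n → Eu n → ℝ := fun i z => (z i - x i) * (l ^ (n - 1) * ψ (x + l • (z - x)))
  have hφ : ∀ i, ContDiff ℝ (⊤ : ℕ∞) (φ i) := by
    intro i
    have h1 : ContDiff ℝ (⊤ : ℕ∞) fun z : Eu n => z i := contDiff_apply ℝ ℝ i
    have h2 : ContDiff ℝ (⊤ : ℕ∞) fun z : Eu n => ψ (x + l • (z - x)) :=
      hψ.comp (contDiff_const.add ((contDiff_id.sub contDiff_const).const_smul l))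
    exact (h1.sub contDiff_const).mul (contDiff_const.mul h2)
  have hφs : ∀ i, tsupport (φ i) ⊆ cube c r := by
    intro i
    refine closure_minimal (fun z hz => ?_) Metric.isClosed_closedBall
    refine mem_cube_of_dilate hx hl (hsupp (subset_tsupport _ ?_))
    intro h0
    apply hz
    simp [φ, h0]
  have hderiv : ∀ i z, fderiv ℝ (φ i) z (Pi.single i 1) = l ^ (n - 1) * ψ (x + l • (z - x)) +
      (z i - x i) * (l ^ n * fderiv ℝ ψ (x + l • (z - x)) (Pi.single i 1)) := by
    intro i z
    have hd : HasFDerivAt ψ (fderiv ℝ ψ (x + l • (z - x))) (x + l • (z - x)) :=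
      (hψ.differentiable (by simp) _).hasFDerivAt
    have hline : HasFDerivAt (fun z : Eu n => x + l • (z - x))
        (l • ContinuousLinearMap.id ℝ (Eu n)) z :=
      (((hasFDerivAt_id z).sub_const x).const_smul l).const_add x
    have hpr : HasFDerivAt (fun z : Eu n => z i - x i)
        (ContinuousLinearMap.proj (R := ℝ) (φ := fun _ : Fin n => ℝ) i) z :=
      (hasFDerivAt_apply i z).sub_const (x i)
    have := (hpr.mul ((hd.comp z hline).const_mul (l ^ (n - 1)))).fderiv
    have h2 : fderiv ℝ (φ i) z = _ := this
    rw [h2]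
    obtain ⟨k, rfl⟩ : ∃ k, n = k + 1 := ⟨n - 1, by omega⟩
    simp only [Function.comp, add_apply, smul_apply,
      ContinuousLinearMap.comp_apply, ContinuousLinearMap.id_apply, map_smul, smul_eq_mul,
      ContinuousLinearMap.proj_apply, Pi.single_eq_same, Nat.add_sub_cancel, pow_succ]
    ring
  have hint : ∀ i, Integrable fun z => G z * fderiv ℝ (φ i) z (Pi.single i 1) := by
    intro i
    have hc : Continuous fun z => G z * fderiv ℝ (φ i) z (Pi.single i 1) :=
      hG.mul (((hφ i).continuous_fderiv (by simp)).clm_apply continuous_const)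
    refine hc.integrable_of_hasCompactSupport
      (HasCompactSupport.intro (isCompact_closedBall c r) fun z hz => ?_)
    have h1 : fderiv ℝ (φ i) z = 0 := by
      by_contra hne
      exact hz (hφs i (support_fderiv_subset ℝ hne))
    simp [h1]
  rw [← Finset.sum_neg_distrib]
  simp_rw [show ∀ i, -∫ z, h z i * ((z i - x i) * (l ^ (n - 1) * ψ (x + l • (z - x)))) =
    ∫ z, G z * fderiv ℝ (φ i) z (Pi.single i 1) from fun i => (hw (φ i) (hφ i) (hφs i) i).symm]
  rw [← integral_finsetSum _ fun i _ => hint i]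
  refine integral_congr_ae (Eventually.of_forall fun z => ?_)
  simp only [← Finset.mul_sum]
  congr 1
  simp_rw [hderiv, Finset.sum_add_distrib]
  rw [Finset.sum_const, Finset.card_univ, Fintype.card_fin, nsmul_eq_mul, mul_assoc]
  congr 1
  conv_lhs => rw [pi_eq_sum_univ' (z - x)]
  rw [map_sum, Finset.mul_sum]
  refine Finset.sum_congr rfl fun i _ => ?_
  rw [map_smul, ← pi_eq_sum_univ', smul_eq_mul, Pi.sub_apply]
  ring

theorem integral_comp_dilate (f : Eu n → ℝ) (x : Eu n) {l : ℝ} (hl : 0 < l) :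
    ∫ z, f (x + l • (z - x)) = (l ^ n)⁻¹ * ∫ w, f w := by
  rw [integral_sub_right_eq_self (fun z => f (x + l • z)) x,
    Measure.integral_comp_smul volume (fun z => f (x + z)) l, integral_add_left_eq_self,
    Module.finrank_fin_fun, abs_of_pos (by positivity), smul_eq_mul]

/-- Hölder's inequality bounds the derivative of the average by a multiple of `l^{n/q-2}`. The
exponent is integrable at infinity exactly because `q > n`. -/
theorem abs_integral_deriv_le (hn : 0 < n) {q : ℝ} (hq : 1 < q) {ψ : Eu n → ℝ} {h : Eu n → Eu n}
    {c x : Eu n} {r K : ℝ} (hh : MemLp h (ENNReal.ofReal q) volume)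
    (hx : x ∈ cube c r) (hψ : Continuous ψ) (hsupp : tsupport ψ ⊆ cube c r)
    (hψ0 : ∀ w, 0 ≤ ψ w) (hK : 0 < K) (hψK : ∀ w, ψ w ≤ K) (hψ1 : ∫ w, ψ w = 1)
    {l : ℝ} (hl : 1 ≤ l) :
    |∑ i, ∫ z, h z i * ((z i - x i) * (l ^ (n - 1) * ψ (x + l • (z - x))))| ≤
      n * (2 * r) * K ^ (1 / q) * (∫ z, ‖h z‖ ^ q) ^ (1 / q) * l ^ ((n : ℝ) / q - 1 - 1) := by
  have hl0 : 0 < l := by linarith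
  have hr : 0 ≤ r := by
    have : dist x c ≤ r := hx
    exact dist_nonneg.trans this
  have hconj : q.HolderConjugate (q / (q - 1)) := Real.HolderConjugate.conjExponent hq
  set q' := q / (q - 1) with hq'
  have hq'1 : 1 < q' := hconj.symm.lt
  let g : Eu n → ℝ := fun z => ψ (x + l • (z - x))
  have hgc : Continuous g := by fun_prop
  have hgz : ∀ z, z ∉ cube c r → g z = 0 := fun z hz => by
    refine image_eq_zero_of_notMem_tsupport (f := ψ) fun hm => hz ?_
    exact mem_cube_of_dilate hx hl (hsupp hm)
  have hgs : HasCompactSupport g := HasCompactSupport.intro (isCompact_closedBall c r) hgz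
  have hg0 : ∀ z, 0 ≤ g z := fun z => hψ0 _
  have hgL : MemLp g (ENNReal.ofReal q') volume := hgc.memLp_of_hasCompactSupport hgs
  -- On the support of the rescaled mollifier `‖z - x‖` is at most `2 r / l`; this extra factor
  -- `1 / l` is what makes the derivative integrable in `l`.
  have hdist : ∀ i z, |z i - x i| * g z ≤ 2 * r / l * g z := by
    intro i z
    by_cases hz : g z = 0
    · simp [hz]
    refine mul_le_mul_of_nonneg_right ?_ (hg0 z)
    have hp : x + l • (z - x) ∈ cube c r := hsupp (subset_tsupport _ hz)
    have h1 : x + l • (z - x) ∈ Metric.closedBall x (2 * r) := by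
      have h2 : dist (x + l • (z - x)) c ≤ r := hp
      have h3 : dist x c ≤ r := hx
      have := dist_triangle_right (x + l • (z - x)) x c
      rw [Metric.mem_closedBall]; linarith
    have h2 := mem_closedBall_of_dilate hl0 h1
    exact (norm_le_pi_norm (z - x) i).trans h2
  have hprod : Integrable fun z => ‖h z‖ * g z := by
    have : ENNReal.HolderTriple (ENNReal.ofReal q) (ENNReal.ofReal q') 1 :=
      hconj.ennrealOfReal
    exact hh.norm.integrable_mul hgL
  have hholder := integral_mul_le_Lp_mul_Lq_of_nonneg (μ := volume) hconj
    (f := fun z => ‖h z‖) (g := g) (Eventually.of_forall fun z => norm_nonneg _)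
    (Eventually.of_forall hg0) hh.norm hgL
  have hgint : Integrable g := hgc.integrable_of_hasCompactSupport hgs
  -- `ψ^{q'} ≤ K^{q'-1} ψ`, and the rescaled `ψ` has integral `l^{-n}`.
  have hgq : ∫ z, g z ^ q' ≤ K ^ (q' - 1) * l ^ (-(n : ℝ)) := by
    have h1 : ∫ z, g z = l ^ (-(n : ℝ)) := by
      have := integral_comp_dilate ψ x hl0
      rw [hψ1, mul_one] at this
      rw [Real.rpow_neg hl0.le, Real.rpow_natCast]
      exact this
    rw [← h1, ← integral_const_mul]
    refine integral_mono_of_nonneg (Eventually.of_forall fun z => Real.rpow_nonneg (hg0 z) _)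
      (hgint.const_mul _) (Eventually.of_forall fun z => ?_)
    have h2 : g z ^ q' = g z ^ (q' - 1) * g z := by
      rcases (hg0 z).eq_or_lt with h0 | h0
      · rw [← h0, Real.zero_rpow (by linarith), mul_zero]
      · rw [← Real.rpow_add_one h0.ne']; ring_nf
    change g z ^ q' ≤ _
    rw [h2]
    exact mul_le_mul_of_nonneg_right
      (Real.rpow_le_rpow (hg0 z) (hψK _) (by linarith)) (hg0 z)
  have hgq2 : (∫ z, g z ^ q') ^ (1 / q') ≤ K ^ (1 / q) * l ^ ((n : ℝ) / q - n) := by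
    refine (Real.rpow_le_rpow (integral_nonneg fun z => Real.rpow_nonneg (hg0 z) _) hgq
      (by positivity)).trans (le_of_eq ?_)
    rw [Real.mul_rpow (by positivity) (by positivity), ← Real.rpow_mul hK.le,
      ← Real.rpow_mul hl0.le]
    have hq1 : q - 1 ≠ 0 := by linarith
    have hq0 : q ≠ 0 := by linarith
    congr 2 <;> rw [hq'] <;> field_simp <;> ring
  have hterm : ∀ i, |∫ z, h z i * ((z i - x i) * (l ^ (n - 1) * g z))| ≤
      2 * r / l * l ^ (n - 1) * ∫ z, ‖h z‖ * g z := by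
    intro i
    rw [← integral_const_mul, ← Real.norm_eq_abs]
    refine norm_integral_le_of_norm_le (hprod.const_mul _) (Eventually.of_forall fun z => ?_)
    rw [Real.norm_eq_abs, abs_mul, abs_mul, abs_of_nonneg (mul_nonneg (by positivity) (hg0 z))]
    have h1 : |h z i| ≤ ‖h z‖ := norm_le_pi_norm (h z) i
    calc |h z i| * (|z i - x i| * (l ^ (n - 1) * g z))
        = |h z i| * (l ^ (n - 1) * (|z i - x i| * g z)) := by ring
      _ ≤ ‖h z‖ * (l ^ (n - 1) * (2 * r / l * g z)) := by
          have := hdist i z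
          have h3 : 0 ≤ |z i - x i| * g z := mul_nonneg (abs_nonneg _) (hg0 z)
          gcongr
      _ = _ := by ring
  have hpow : 2 * r / l * l ^ (n - 1) * l ^ ((n : ℝ) / q - n) ≤
      2 * r * l ^ ((n : ℝ) / q - 1 - 1) := by
    have h1 : l ^ (n - 1) = l ^ ((n : ℝ) - 1) := by
      rw [← Real.rpow_natCast, Nat.cast_sub (by omega), Nat.cast_one]
    have h2 : 2 * r / l = 2 * r * l ^ (-1 : ℝ) := by
      rw [Real.rpow_neg_one, div_eq_mul_inv]
    rw [h1, h2, mul_assoc, mul_assoc, ← Real.rpow_add hl0, ← Real.rpow_add hl0]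
    refine le_of_eq ?_
    ring_nf
  calc |∑ i, ∫ z, h z i * ((z i - x i) * (l ^ (n - 1) * g z))|
      ≤ ∑ i, |∫ z, h z i * ((z i - x i) * (l ^ (n - 1) * g z))| := Finset.abs_sum_le_sum_abs _ _
    _ ≤ ∑ i : Fin n, 2 * r / l * l ^ (n - 1) * ∫ z, ‖h z‖ * g z :=
        Finset.sum_le_sum fun i _ => hterm i
    _ = n * (2 * r / l * l ^ (n - 1) * ∫ z, ‖h z‖ * g z) := by
        rw [Finset.sum_const, Finset.card_univ, Fintype.card_fin, nsmul_eq_mul]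
    _ ≤ n * (2 * r / l * l ^ (n - 1) * ((∫ z, ‖h z‖ ^ q) ^ (1 / q) *
          (K ^ (1 / q) * l ^ ((n : ℝ) / q - n)))) := by
        have hH : 0 ≤ (∫ z, ‖h z‖ ^ q) ^ (1 / q) :=
          Real.rpow_nonneg (integral_nonneg fun z => Real.rpow_nonneg (norm_nonneg _) _) _
        refine mul_le_mul_of_nonneg_left (mul_le_mul_of_nonneg_left ?_ (by positivity))
          (by positivity)
        exact hholder.trans (mul_le_mul_of_nonneg_left hgq2 hH)
    _ = n * K ^ (1 / q) * (∫ z, ‖h z‖ ^ q) ^ (1 / q) *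
          (2 * r / l * l ^ (n - 1) * l ^ ((n : ℝ) / q - n)) := by ring
    _ ≤ n * K ^ (1 / q) * (∫ z, ‖h z‖ ^ q) ^ (1 / q) * (2 * r * l ^ ((n : ℝ) / q - 1 - 1)) := by
        have hH : 0 ≤ (∫ z, ‖h z‖ ^ q) ^ (1 / q) :=
          Real.rpow_nonneg (integral_nonneg fun z => Real.rpow_nonneg (norm_nonneg _) _) _
        gcongr
    _ = _ := by ring

/-! ### Morrey's estimate on one cube -/

/-- As the dilation factor `l` grows, the rescaled mollifiers concentrate at `x`, so the
averages of the continuous function `G` come arbitrarily close to `G x`. Compact support of `ψ`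
lets `l` be chosen from the modulus of continuity at `x` alone. -/
theorem exists_average_close {G ψ : Eu n → ℝ} (hG : Continuous G) (hψ : Continuous ψ)
    {x : Eu n} {R : ℝ} (hsupp : tsupport ψ ⊆ Metric.closedBall x R)
    (hψ0 : ∀ w, 0 ≤ ψ w) (hψ1 : ∫ w, ψ w = 1) {ε : ℝ} (hε : 0 < ε) :
    ∃ l : ℝ, 1 ≤ l ∧ |(∫ z, G z * (l ^ n * ψ (x + l • (z - x)))) - G x| ≤ ε := by
  obtain ⟨δ, hδ, hGδ⟩ := Metric.continuous_iff.1 hG x ε hε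
  obtain ⟨l, hl1, hl⟩ : ∃ l : ℝ, 1 ≤ l ∧ R / l < δ := by
    refine ⟨max 1 (R / δ + 1), le_max_left _ _, ?_⟩
    have h1 : R / δ < max 1 (R / δ + 1) := (lt_add_one _).trans_le (le_max_right _ _)
    have h0 : (0 : ℝ) < max 1 (R / δ + 1) := zero_lt_one.trans_le (le_max_left _ _)
    rw [div_lt_iff₀ h0]
    rw [div_lt_iff₀ hδ] at h1
    linarith
  have hl0 : 0 < l := by linarith
  refine ⟨l, hl1, ?_⟩
  let Ψ : Eu n → ℝ := fun z => l ^ n * ψ (x + l • (z - x))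
  have hΨc : Continuous Ψ := by fun_prop
  have hΨ0 : ∀ z, 0 ≤ Ψ z := fun z => mul_nonneg (by positivity) (hψ0 _)
  have hmem : ∀ z, Ψ z ≠ 0 → ‖z - x‖ ≤ R / l := fun z hz =>
    mem_closedBall_of_dilate hl0 (hsupp (subset_tsupport _ (right_ne_zero_of_mul hz)))
  have hΨs : HasCompactSupport Ψ := by
    refine HasCompactSupport.intro (isCompact_closedBall x (R / l)) fun z hz => ?_
    by_contra hne
    exact hz (mem_closedBall_iff_norm.2 (hmem z hne))
  have hΨi : Integrable Ψ := hΨc.integrable_of_hasCompactSupport hΨs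
  have hΨ1 : ∫ z, Ψ z = 1 := by
    simp only [Ψ]
    rw [integral_const_mul, integral_comp_dilate ψ x hl0, hψ1, mul_one,
      mul_inv_cancel₀ (by positivity)]
  have hGΨ : Integrable fun z => G z * Ψ z :=
    (hG.mul hΨc).integrable_of_hasCompactSupport hΨs.mul_left
  have h1 : (∫ z, G z * Ψ z) - G x = ∫ z, (G z - G x) * Ψ z := by
    simp_rw [sub_mul]
    rw [integral_sub hGΨ (hΨi.const_mul _), integral_const_mul, hΨ1, mul_one]
  change |(∫ z, G z * Ψ z) - G x| ≤ ε
  rw [h1, ← Real.norm_eq_abs]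
  have h2 : ∫ z, ε * Ψ z = ε := by rw [integral_const_mul, hΨ1, mul_one]
  rw [← h2]
  refine norm_integral_le_of_norm_le (hΨi.const_mul _) (Eventually.of_forall fun z => ?_)
  rw [norm_mul, Real.norm_of_nonneg (hΨ0 z)]
  by_cases hz : Ψ z = 0
  · simp [hz]
  · refine mul_le_mul_of_nonneg_right ?_ (hΨ0 z)
    have := hGδ z (by rw [dist_eq_norm]; exact (hmem z hz).trans_lt hl)
    rw [Real.dist_eq] at this
    exact this.le

/-- Integrating `B' ≤ D l^{a-1}` over `[1, l]` with `a < 0` gives an increment bounded uniformly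
in `l`. Monotonicity of `B - (D/a) l^a` replaces the integral, so no integrability of `B'` is
needed. -/
theorem abs_sub_le_of_deriv_bound {B B' : ℝ → ℝ} {D a : ℝ} (ha : a < 0) (hD : 0 ≤ D)
    (hB : ∀ l, 1 ≤ l → HasDerivAt B (B' l) l) (hb : ∀ l, 1 ≤ l → B' l ≤ D * l ^ (a - 1))
    {l : ℝ} (hl : 1 ≤ l) : B l - B 1 ≤ D / (-a) := by
  let f : ℝ → ℝ := fun l => B l - D / a * l ^ a
  have hf : ∀ l, 1 ≤ l → HasDerivAt f (B' l - D * l ^ (a - 1)) l := by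
    intro l hl
    have h1 := ((hasDerivAt_id l).rpow_const (p := a) (Or.inl (by simp; linarith))).const_mul
      (D / a)
    have h2 : D / a * (1 * a * id l ^ (a - 1)) = D * l ^ (a - 1) := by
      rw [id, one_mul, ← mul_assoc, div_mul_cancel₀ D ha.ne]
    rw [h2] at h1
    exact (hB l hl).sub h1
  have hanti : AntitoneOn f (Ici 1) := by
    refine antitoneOn_of_deriv_nonpos (convex_Ici 1)
      (fun l hl => (hf l hl).continuousAt.continuousWithinAt) ?_ ?_
    · rw [interior_Ici]
      exact fun l hl => (hf l (le_of_lt hl)).differentiableAt.differentiableWithinAt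
    · rw [interior_Ici]
      intro l hl
      rw [(hf l (le_of_lt hl)).deriv]
      linarith [hb l (le_of_lt hl)]
  have h := hanti (mem_Ici.2 le_rfl) (mem_Ici.2 hl) hl
  simp only [f, Real.one_rpow, mul_one] at h
  have h2 : D / a ≤ 0 := div_nonpos_of_nonneg_of_nonpos hD ha.le
  have h3 : 0 ≤ l ^ a := Real.rpow_nonneg (by linarith) _
  rw [div_neg]
  nlinarith

/-- Morrey's estimate against a fixed average: the number `∫ G ψ` does not depend on the point
`x` of the cube, so two applications compare any two points. Here `h` only has to act as the
weak gradient of `G` on test functions supported in the closed cube. -/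
theorem abs_sub_average_le (hn : 0 < n) {q : ℝ} (hq : (n : ℝ) < q) {G ψ : Eu n → ℝ}
    {h : Eu n → Eu n} {c x : Eu n} {r K : ℝ} (hG : Continuous G)
    (hh : MemLp h (ENNReal.ofReal q) volume)
    (hw : ∀ φ : Eu n → ℝ, ContDiff ℝ (⊤ : ℕ∞) φ → tsupport φ ⊆ cube c r → ∀ i : Fin n,
      ∫ z, G z * fderiv ℝ φ z (Pi.single i 1) = - ∫ z, h z i * φ z)
    (hx : x ∈ cube c r) (hψ : ContDiff ℝ (⊤ : ℕ∞) ψ) (hsupp : tsupport ψ ⊆ cube c r)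
    (hψ0 : ∀ w, 0 ≤ ψ w) (hK : 0 < K) (hψK : ∀ w, ψ w ≤ K) (hψ1 : ∫ w, ψ w = 1) :
    |G x - ∫ z, G z * ψ z| ≤
      n * (2 * r) * K ^ (1 / q) * (∫ z, ‖h z‖ ^ q) ^ (1 / q) / (1 - n / q) := by
  have hn1 : (1 : ℝ) ≤ n := by exact_mod_cast hn
  have hq1 : 1 < q := by linarith
  have hxr : dist x c ≤ r := hx
  have hr : 0 ≤ r := dist_nonneg.trans hxr
  have hsuppx : tsupport ψ ⊆ Metric.closedBall x (2 * r) := fun w hw => by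
    have h2 : dist w c ≤ r := hsupp hw
    have := dist_triangle_right w x c
    rw [Metric.mem_closedBall]; linarith
  set D : ℝ := n * (2 * r) * K ^ (1 / q) * (∫ z, ‖h z‖ ^ q) ^ (1 / q) with hD
  have hD0 : 0 ≤ D := by
    have hH : 0 ≤ (∫ z, ‖h z‖ ^ q) ^ (1 / q) :=
      Real.rpow_nonneg (integral_nonneg fun z => Real.rpow_nonneg (norm_nonneg _) _) _
    positivity
  set a : ℝ := n / q - 1 with ha
  have ha0 : a < 0 := by
    have : (n : ℝ) / q < 1 := (div_lt_one (by linarith)).2 hq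
    linarith
  have ha1 : 1 - n / q = -a := by rw [ha]; ring
  rw [ha1]
  let B : ℝ → ℝ := fun l => ∫ z, G z * (l ^ n * ψ (x + l • (z - x)))
  let B' : ℝ → ℝ := fun l => ∫ z, G z * (n * l ^ (n - 1) * ψ (x + l • (z - x)) +
        l ^ n * fderiv ℝ ψ (x + l • (z - x)) (z - x))
  have hB : ∀ l, 1 ≤ l → HasDerivAt B (B' l) l := fun l hl =>
    hasDerivAt_average hG hψ hsuppx (by linarith)
  have hB' : ∀ l, 1 ≤ l → |B' l| ≤ D * l ^ (a - 1) := by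
    intro l hl
    simp only [B']
    rw [integral_deriv_eq hn hG hw hx hψ hsupp hl, abs_neg]
    exact abs_integral_deriv_le hn hq1 hh hx hψ.continuous hsupp hψ0 hK hψK hψ1 hl
  have hB1 : B 1 = ∫ z, G z * ψ z := by simp [B]
  rw [← hB1]
  refine le_of_forall_pos_le_add fun ε hε => ?_
  obtain ⟨l, hl, hlε⟩ := exists_average_close hG hψ.continuous hsuppx hψ0 hψ1 hε
  change |B l - G x| ≤ ε at hlε
  have h1 := abs_sub_le_of_deriv_bound ha0 hD0 hB
    (fun l hl => (abs_le.1 (hB' l hl)).2) hl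
  have h2 := abs_sub_le_of_deriv_bound (B := fun l => -B l) (B' := fun l => -B' l) ha0 hD0
    (fun l hl => (hB l hl).neg) (fun l hl => by linarith [(abs_le.1 (hB' l hl)).1]) hl
  have h3 := abs_le.1 hlε
  rw [abs_le]
  constructor <;> linarith

/-- On compact subsets of `Ω` the weak gradient is `q`-integrable, because `t^q ≤ 1 + t^p` and
compact sets have finite measure. -/
theorem integrableOn_rpow_of_isCompact {p q : ℝ} (hq0 : 0 < q) (hpq : q ≤ p) {Ω : Set (Eu n)}
    {F : Eu n → ℝ} {g : Eu n → Eu n} (hF : ContL1pRep Ω p F g) {S : Set (Eu n)}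
    (hS : IsCompact S) (hSΩ : S ⊆ Ω) : IntegrableOn (fun z => ‖g z‖ ^ q) S := by
  have hg : IntegrableOn g S := (hF.2.1.2.1.mono_set hSΩ).integrableOn_isCompact hS
  have h1 : IntegrableOn (fun z => 1 + ‖g z‖ ^ p) S :=
    (integrableOn_const hS.measure_lt_top.ne).add (hF.2.2.mono_set hSΩ)
  refine h1.mono' (hg.1.norm.aemeasurable.pow_const q).aestronglyMeasurable
    (Eventually.of_forall fun z => ?_)
  rw [Real.norm_of_nonneg (Real.rpow_nonneg (norm_nonneg _) _)]
  rcases le_total ‖g z‖ 1 with h | h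
  · have h2 := Real.rpow_le_one (norm_nonneg (g z)) h hq0.le
    have h3 := Real.rpow_nonneg (norm_nonneg (g z)) p
    linarith
  · have h2 := Real.rpow_le_rpow_of_exponent_le h hpq
    linarith

/-- Morrey's inequality on a closed cube contained in `Ω`. -/
theorem morrey_cube (hn : 0 < n) {p q : ℝ} (hq : (n : ℝ) < q) (hpq : q ≤ p) {Ω : Set (Eu n)}
    {F : Eu n → ℝ} {g : Eu n → Eu n} (hF : ContL1pRep Ω p F g)
    {c : Eu n} {r : ℝ} (hr : 0 < r) (hQ : cube c r ⊆ Ω) {x y : Eu n}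
    (hx : x ∈ cube c r) (hy : y ∈ cube c r) :
    |F x - F y| ≤ 2 * n * 3 ^ (n / q) / (1 - n / q) * (2 * r) ^ (1 - n / q) *
      (∫ z in cube c r, ‖g z‖ ^ q) ^ (1 / q) := by
  have hn1 : (1 : ℝ) ≤ n := by exact_mod_cast hn
  have hq0 : 0 < q := by linarith
  have hQm : MeasurableSet (cube c r) := Metric.isClosed_closedBall.measurableSet
  have hQc : IsCompact (cube c r) := isCompact_closedBall c r
  obtain ⟨ψ, hψ, hsupp, hψ0, hψK, hψ1⟩ := exists_mollifier c hr
  -- A globally continuous extension of `F` from the closed cube makes the averages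
  -- differentiable without any care about the boundary of `Ω`.
  obtain ⟨G, hG⟩ := ContinuousMap.exists_restrict_eq (s := cube c r) Metric.isClosed_closedBall
    ⟨(cube c r).domRestrict F, (hF.1.mono hQ).domRestrict⟩
  have hGF : ∀ z ∈ cube c r, G z = F z := fun z hz => DFunLike.congr_fun hG ⟨z, hz⟩
  let h : Eu n → Eu n := (cube c r).indicator g
  have hgQ : IntegrableOn g (cube c r) := (hF.2.1.2.1.mono_set hQ).integrableOn_isCompact hQc
  have hnorm : ∀ z, ‖h z‖ ^ q = (cube c r).indicator (fun z => ‖g z‖ ^ q) z := by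
    intro z
    by_cases hz : z ∈ cube c r
    · simp [h, hz]
    · simp [h, hz, Real.zero_rpow hq0.ne']
  have hh : MemLp h (ENNReal.ofReal q) volume := by
    have hm : AEStronglyMeasurable h volume :=
      ((integrable_indicator_iff hQm).2 hgQ).aestronglyMeasurable
    rw [← integrable_norm_rpow_iff hm (by simpa using hq0) ENNReal.ofReal_ne_top,
      ENNReal.toReal_ofReal hq0.le]
    simp_rw [hnorm]
    exact (integrable_indicator_iff hQm).2 (integrableOn_rpow_of_isCompact hq0 hpq hF hQc hQ)
  have hint : ∫ z, ‖h z‖ ^ q = ∫ z in cube c r, ‖g z‖ ^ q := by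
    simp_rw [hnorm]
    exact integral_indicator hQm
  have hw : ∀ φ : Eu n → ℝ, ContDiff ℝ (⊤ : ℕ∞) φ → tsupport φ ⊆ cube c r → ∀ i : Fin n,
      ∫ z, G z * fderiv ℝ φ z (Pi.single i 1) = - ∫ z, h z i * φ z := by
    intro φ hφ hφs i
    have h1 := hF.2.1.2.2 φ hφ (hQc.of_isClosed_subset (isClosed_tsupport φ) hφs)
      (hφs.trans hQ) i
    have hφ0 : ∀ z, z ∉ cube c r → φ z = 0 := fun z hz =>
      image_eq_zero_of_notMem_tsupport fun hm => hz (hφs hm)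
    have hφ1 : ∀ z, z ∉ cube c r → fderiv ℝ φ z = 0 := fun z hz => by
      by_contra hne
      exact hz (hφs (support_fderiv_subset ℝ hne))
    rw [setIntegral_eq_integral_of_forall_compl_eq_zero
        fun z hz => by simp [hφ1 z fun hm => hz (hQ hm)],
      setIntegral_eq_integral_of_forall_compl_eq_zero
        fun z hz => by simp [hφ0 z fun hm => hz (hQ hm)]] at h1
    convert h1 using 1
    · refine integral_congr_ae (Eventually.of_forall fun z => ?_)
      by_cases hz : z ∈ cube c r
      · simp [hGF z hz]
      · simp [hφ1 z hz]
    · congr 1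
      refine integral_congr_ae (Eventually.of_forall fun z => ?_)
      by_cases hz : z ∈ cube c r
      · simp [h, hz]
      · simp [hφ0 z hz]
  have hK : (0 : ℝ) < (3 / (2 * r)) ^ n := by positivity
  have key : ∀ z ∈ cube c r, |F z - ∫ w, G w * ψ w| ≤
      n * (2 * r) * ((3 / (2 * r)) ^ n) ^ (1 / q) *
        (∫ z in cube c r, ‖g z‖ ^ q) ^ (1 / q) / (1 - n / q) := by
    intro z hz
    rw [← hGF z hz, ← hint]
    exact abs_sub_average_le hn hq G.continuous hh hw hz hψ hsupp hψ0 hK hψK hψ1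
  have hpow : 2 * r * ((3 / (2 * r)) ^ n) ^ (1 / q) = 3 ^ (n / q) * (2 * r) ^ (1 - n / q) := by
    have h2r : 0 < 2 * r := by positivity
    rw [← Real.rpow_natCast, ← Real.rpow_mul (by positivity),
      Real.div_rpow (by norm_num) h2r.le, Real.rpow_sub h2r, Real.rpow_one, mul_one_div]
    ring
  have h3 := key x hx
  have h4 := key y hy
  rw [abs_sub_comm] at h4
  refine (abs_sub_le (F x) (∫ w, G w * ψ w) (F y)).trans ((add_le_add h3 h4).trans
    (le_of_eq ?_))
  rw [mul_assoc (n : ℝ), hpow]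
  ring

/-! ### Summation along the chain -/

/-- Integrated form of the bound `∑ᵢ 1_{Qᵢ} ≤ M 1_U`. -/
theorem sum_setIntegral_le {m M : ℕ} {c : Fin m → Eu n} {r : Fin m → ℝ} (hM : multBdd c r M)
    {f : Eu n → ℝ} (hf0 : ∀ z, 0 ≤ f z) (hf : IntegrableOn f (⋃ i, cube (c i) (r i))) :
    ∑ i, ∫ z in cube (c i) (r i), f z ≤ M * ∫ z in ⋃ i, cube (c i) (r i), f z := by
  set U := ⋃ i, cube (c i) (r i) with hU
  have hQm : ∀ i, MeasurableSet (cube (c i) (r i)) := fun i =>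
    Metric.isClosed_closedBall.measurableSet
  have hsub : ∀ i, cube (c i) (r i) ⊆ U := fun i => subset_iUnion (fun i => cube (c i) (r i)) i
  have h1 : ∀ i, ∫ z in cube (c i) (r i), f z =
      ∫ z in U, (cube (c i) (r i)).indicator f z := fun i => by
    rw [setIntegral_indicator (hQm i), inter_eq_self_of_subset_right (hsub i)]
  have hi : ∀ i, IntegrableOn ((cube (c i) (r i)).indicator f) U := fun i => hf.indicator (hQm i)
  simp_rw [h1]
  rw [← integral_finsetSum _ fun i _ => hi i, ← integral_const_mul]
  refine integral_mono (integrable_finsetSum _ fun i _ => hi i) (hf.const_mul _) fun z => ?_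
  classical
  have h2 : ∑ i, (cube (c i) (r i)).indicator f z = {i | z ∈ cube (c i) (r i)}.ncard * f z := by
    simp_rw [indicator_apply]
    rw [← Finset.sum_filter, Finset.sum_const, nsmul_eq_mul]
    congr 2
    rw [ncard_eq_toFinset_card']
    congr 1
    ext i
    simp
  change ∑ i, (cube (c i) (r i)).indicator f z ≤ M * f z
  rw [h2]
  exact mul_le_mul_of_nonneg_right (by exact_mod_cast hM z) (hf0 z)

theorem abs_sub_le_sum_of_chain {Ω : Set (Eu n)} {x y : Eu n} {F : Eu n → ℝ} {m : ℕ}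
    {c : Fin (m + 1) → Eu n} {r : Fin (m + 1) → ℝ} (hch : IsCubeChain Ω x y m c r)
    {A : Fin (m + 1) → ℝ}
    (hA : ∀ i, ∀ u ∈ cube (c i) (r i), ∀ v ∈ cube (c i) (r i), |F u - F v| ≤ A i) :
    |F x - F y| ≤ ∑ i, A i := by
  obtain ⟨-, -, hx, hy, hne⟩ := hch
  induction m generalizing y with
  | zero => simpa using hA 0 x hx y hy
  | succ m ih =>
    obtain ⟨z, hz1, hz2⟩ := hne (Fin.last m)
    have h1 := ih (y := z) (c := fun i => c i.castSucc) (r := fun i => r i.castSucc)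
      (A := fun i => A i.castSucc) (fun i => hA i.castSucc) hx hz1 (fun i => hne i.castSucc)
    have h2 := hA (Fin.last (m + 1)) z hz2 y hy
    rw [Fin.sum_univ_castSucc]
    exact (abs_sub_le _ (F z) _).trans (add_le_add h1 h2)

/-- Lemma 3.2.  Let `Ω ⊆ ℝⁿ` be a domain, `n < q ≤ p < ∞` and
`β = (q−n)/(q−1)`, and let `F ∈ L¹_p(Ω)` be continuous.  Let `x, y ∈ Ω` and let
`Ch = {Q_i}` be a chain of cubes joining `x` to `y` in `Ω` with covering multiplicity `M`.
Then `|F(x) − F(y)| ≤ C(n,q)·M^{1/q}·(Σ_i (diam Q_i)^β)^{1−1/q}·(∫_U ‖∇F‖^q)^{1/q}`,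
where `U = ∪_i Q_i`. -/
theorem statement11 (n : ℕ) (hn : 0 < n) (q : ℝ) (hq : (n:ℝ) < q) :
    ∃ C : ℝ, 0 < C ∧ ∀ p : ℝ, q ≤ p →
      ∀ (Ω : Set (Eu n)), IsOpen Ω → IsConnected Ω →
        ∀ F g, ContL1pRep Ω p F g →
          ∀ x ∈ Ω, ∀ y ∈ Ω,
            ∀ (m : ℕ) (c : Fin (m+1) → Eu n) (r : Fin (m+1) → ℝ) (M : ℕ),
              IsCubeChain Ω x y m c r → multBdd c r M →
              |F x - F y| ≤ C * (M : ℝ) ^ (1/q) *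
                (∑ i, (2 * r i) ^ ((q - n)/(q - 1))) ^ (1 - 1/q) *
                (∫ z in ⋃ i, cube (c i) (r i), ‖g z‖ ^ q) ^ (1/q) := by
  have hn1 : (1 : ℝ) ≤ n := by exact_mod_cast hn
  have hq1 : 1 < q := by linarith
  have hq0 : 0 < q := by linarith
  have hnq : 0 < 1 - n / q := sub_pos.2 ((div_lt_one hq0).2 hq)
  refine ⟨2 * n * 3 ^ (n / q) / (1 - n / q), by positivity, ?_⟩
  intro p hpq Ω _ _ F g hF x _ y _ m c r M hch hM
  set C : ℝ := 2 * n * 3 ^ (n / q) / (1 - n / q) with hC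
  have hC0 : 0 < C := by positivity
  have hr : ∀ i, 0 < r i := hch.1
  have hQ : ∀ i, cube (c i) (r i) ⊆ Ω := hch.2.1
  have hconj : (q / (q - 1)).HolderConjugate q :=
    (Real.HolderConjugate.conjExponent hq1).symm
  have hI0 : ∀ S : Set (Eu n), 0 ≤ ∫ z in S, ‖g z‖ ^ q := fun S =>
    integral_nonneg fun z => Real.rpow_nonneg (norm_nonneg _) _
  have h1 := abs_sub_le_sum_of_chain (F := F) hch (A := fun i => C * ((2 * r i) ^ (1 - n / q) *
      (∫ z in cube (c i) (r i), ‖g z‖ ^ q) ^ (1 / q))) fun i u hu v hv => by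
    rw [← mul_assoc]
    exact morrey_cube hn hq hpq hF (hr i) (hQ i) hu hv
  rw [← Finset.mul_sum] at h1
  have h2 := Real.inner_le_Lp_mul_Lq_of_nonneg Finset.univ hconj
    (f := fun i => (2 * r i) ^ (1 - n / q))
    (g := fun i => (∫ z in cube (c i) (r i), ‖g z‖ ^ q) ^ (1 / q))
    (fun i _ => Real.rpow_nonneg (by linarith [hr i]) _)
    (fun i _ => Real.rpow_nonneg (hI0 _) _)
  have h3 : ∀ i, ((2 * r i) ^ (1 - n / q)) ^ (q / (q - 1)) = (2 * r i) ^ ((q - n) / (q - 1)) := by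
    intro i
    rw [← Real.rpow_mul (by linarith [hr i])]
    congr 1
    field_simp
  have h4 : ∀ i, ((∫ z in cube (c i) (r i), ‖g z‖ ^ q) ^ (1 / q)) ^ q =
      ∫ z in cube (c i) (r i), ‖g z‖ ^ q := by
    intro i
    rw [← Real.rpow_mul (hI0 _), one_div_mul_cancel hq0.ne', Real.rpow_one]
  have h5 : 1 / (q / (q - 1)) = 1 - 1 / q := by
    have : q - 1 ≠ 0 := by linarith
    field_simp
  simp_rw [h3, h4, h5] at h2
  have hUc : IsCompact (⋃ i, cube (c i) (r i)) :=
    isCompact_iUnion fun i => isCompact_closedBall _ _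
  have h6 := sum_setIntegral_le hM (fun z => Real.rpow_nonneg (norm_nonneg (g z)) q)
    (integrableOn_rpow_of_isCompact hq0 hpq hF hUc (iUnion_subset hQ))
  have h7 : (∑ i, ∫ z in cube (c i) (r i), ‖g z‖ ^ q) ^ (1 / q) ≤
      (M : ℝ) ^ (1 / q) * (∫ z in ⋃ i, cube (c i) (r i), ‖g z‖ ^ q) ^ (1 / q) := by
    rw [← Real.mul_rpow (Nat.cast_nonneg M) (hI0 _)]
    exact Real.rpow_le_rpow (Finset.sum_nonneg fun i _ => hI0 _) h6 (by positivity)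
  have hS0 : 0 ≤ (∑ i, (2 * r i) ^ ((q - n) / (q - 1))) ^ (1 - 1 / q) :=
    Real.rpow_nonneg (Finset.sum_nonneg fun i _ => Real.rpow_nonneg (by linarith [hr i]) _) _
  calc |F x - F y| ≤ _ := h1
    _ ≤ C * ((∑ i, (2 * r i) ^ ((q - n) / (q - 1))) ^ (1 - 1 / q) *
        ((M : ℝ) ^ (1 / q) * (∫ z in ⋃ i, cube (c i) (r i), ‖g z‖ ^ q) ^ (1 / q))) :=
      mul_le_mul_of_nonneg_left (h2.trans (mul_le_mul_of_nonneg_left h7 hS0)) hC0.le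
    _ = _ := by ring
end
end

section
/- Let Ω be a domain in ℝⁿ, let n < q ≤ p < ∞ and β = (q−n)/(q−1), and let F ∈ L¹_p(Ω) be a continuous function. There exist constants λ = λ(n,q) and C = C(n,q), depending only on n and q, such that for every x, y ∈ Ω, |F(x) − F(y)| ≤ C·d̃_{β,Ω}(x,y)^{1−1/q}·(∫_B ‖∇F(z)‖^q dz)^{1/q}, where B = {z ∈ Ω : d̃_{β,Ω}(x,z) ≤ λ·d̃_{β,Ω}(x,y)}. -/
/-!
Write `δ(z) = dist(z, ∂Ω)` and `D = d̃(x, y)`.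

*Morrey's inequality.* If a cube `Q(a, r)` lies in `Ω`, then
`|F a - F u| ≤ M r ^ (1 - n/q) (∫_Q ‖∇F‖ ^ q) ^ (1/q)` for `u` in it (`morrey`). For `u` and a direction
`e` with `‖e‖ ≤ 1`, consider the averages `A(t) = ∫ F(w) t⁻ⁿ ρ((w - u)/t - e) dw` for a smooth bump `ρ`.
The `t`-derivative of the kernel is minus the divergence of the field
`t⁻ⁿ⁻¹ (w - u) ρ((w - u)/t - e)`, so the weak gradient and Hölder's inequality bound `|A'(t)|` by a
multiple of `t ^ (-n/q)`, which is integrable at `0` (`avgK_sub_le`). Taking `e = (a - u)/r` and `e = 0`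
with vertex `a` gives the same average at `t = r`, and both `F u` and `F a` are close to it.

*Near points.* If `‖x - y‖ ≤ δ(x)/8`, or if `∂Ω` is empty, Morrey's inequality on `Q(x, ‖x - y‖)` is
enough, because `β (1 - 1/q) = 1 - n/q` and this cube is contained in the `d̃`-ball of radius `80 D`
(`near_case`).

*Far points.* Otherwise take a curve `γ` from `x` to `y` of subhyperbolic length below `D`. From a
point `γ(t)` of it pass to the last visit of `γ` in the cube `Q_t = Q(γ(t), δ(γ(t))/8)`, and repeat
(`AdmCurve.chain`). Each arc between consecutive chosen points has length at least a multiple of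
`δ(γ(t)) ^ β`, so `∑ δ(γ(t)) ^ β ≤ 35 D`; the cubes lie in the `d̃`-ball of radius `80 D`
(`AdmCurve.cube_subset`). Because last visits are used, later centers lie outside earlier cubes, and
a pigeonhole argument shows that at most `5 ^ n` cubes share a point (`overlap`). Summing Morrey's
inequality over the chain and applying Hölder's inequality for sums with exponents `q/(q-1)` and `q`
gives the claim (`far_case`).
-/

open MeasureTheory Set Filter ENNReal NNReal

noncomputable section

variable {n : ℕ}

/-! ### Morrey's inequality -/

lemma exists_bump (n : ℕ) : ∃ (ρ : Eu n → ℝ) (C0 : ℝ), ContDiff ℝ (⊤ : ℕ∞) ρ ∧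
    (∀ z, 1 < ‖z‖ → ρ z = 0) ∧ (∀ z, 0 ≤ ρ z) ∧ (∀ z, ρ z ≤ C0) ∧ ∫ z, ρ z = 1 := by
  let b : ContDiffBump (0 : Eu n) := ⟨1/2, 1, by norm_num, by norm_num⟩
  have hc : Continuous (b.normed volume) := b.continuous_normed
  obtain ⟨C0, hC0⟩ := (hc.bounded_above_of_compact_support b.hasCompactSupport_normed)
  refine ⟨b.normed volume, C0, b.contDiff_normed, fun z hz => ?_, fun z => b.nonneg_normed z,
    fun z => (le_abs_self _).trans (hC0 z), b.integral_normed⟩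
  by_contra h
  have : z ∈ Function.support (b.normed volume) := h
  rw [b.support_normed_eq] at this
  simp [b] at this
  linarith

/-- The derivative in the scale `t` of the rescaled kernel `t⁻ⁿ ρ((w - u)/t - e)`; by
`sum_fderiv_fieldX` it is minus a divergence in `w`. -/
lemma hasDerivAt_kern {ρ : Eu n → ℝ} (hρ : ContDiff ℝ (⊤ : ℕ∞) ρ) (u e w : Eu n) {t : ℝ}
    (ht : 0 < t) :
    HasDerivAt (fun t : ℝ => (t ^ n)⁻¹ * ρ (t⁻¹ • (w - u) - e))
      (-((t ^ (n + 1))⁻¹ * (n * ρ (t⁻¹ • (w - u) - e) +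
        t⁻¹ * fderiv ℝ ρ (t⁻¹ • (w - u) - e) (w - u)))) t := by
  have h1 : HasDerivAt (fun t : ℝ => t⁻¹ • (w - u) - e) ((-(t ^ 2)⁻¹) • (w - u)) t :=
    ((hasDerivAt_inv ht.ne').smul_const (w - u)).sub_const e
  have h2 : HasFDerivAt ρ (fderiv ℝ ρ (t⁻¹ • (w - u) - e)) (t⁻¹ • (w - u) - e) :=
    (hρ.differentiable (by simp)).differentiableAt.hasFDerivAt
  have h3 := h2.comp_hasDerivAt t h1
  have h4 : HasDerivAt (fun t : ℝ => (t ^ n)⁻¹) (-(n * (t ^ (n + 1))⁻¹)) t := by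
    have hz := (hasDerivAt_zpow (-(n : ℤ)) t (Or.inl ht.ne'))
    have e1 : (fun x : ℝ => x ^ (-(n : ℤ))) = fun t => (t ^ n)⁻¹ := by
      ext s; rw [zpow_neg, zpow_natCast]
    have e2 : ((-(n : ℤ) : ℤ) : ℝ) * t ^ (-(n : ℤ) - 1) = -(n * (t ^ (n + 1))⁻¹) := by
      rw [show (-(n : ℤ) - 1) = -((n + 1 : ℕ) : ℤ) by push_cast; ring, zpow_neg, zpow_natCast]
      push_cast; ring
    rw [e1, e2] at hz
    exact hz
  refine (h4.mul h3).congr_deriv ?_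
  simp only [map_smul, smul_eq_mul, Function.comp]
  field_simp
  ring

/-- A component of the vector field `t^{-n-1} (w - u) ρ((w - u)/t - e)`. -/
def fieldX (ρ : Eu n → ℝ) (u e : Eu n) (t : ℝ) (i : Fin n) (w : Eu n) : ℝ :=
  (t ^ (n + 1))⁻¹ * ((w i - u i) * ρ (t⁻¹ • (w - u) - e))

lemma contDiff_fieldX {ρ : Eu n → ℝ} (hρ : ContDiff ℝ (⊤ : ℕ∞) ρ) (u e : Eu n) (t : ℝ)
    (i : Fin n) : ContDiff ℝ (⊤ : ℕ∞) (fieldX ρ u e t i) := by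
  unfold fieldX
  have : ContDiff ℝ (⊤ : ℕ∞) (fun w : Eu n => ρ (t⁻¹ • (w - u) - e)) :=
    hρ.comp (by fun_prop)
  have h2 : ContDiff ℝ (⊤ : ℕ∞) (fun w : Eu n => w i - u i) := by fun_prop
  exact contDiff_const.mul (h2.mul this)

/-- The divergence in `w` of the field `fieldX` is minus the `t`-derivative of the rescaled kernel
(compare `hasDerivAt_kern`). -/
lemma sum_fderiv_fieldX {ρ : Eu n → ℝ} (hρ : ContDiff ℝ (⊤ : ℕ∞) ρ) (u e w : Eu n) (t : ℝ) :
    ∑ i, fderiv ℝ (fieldX ρ u e t i) w (Pi.single i 1) =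
      (t ^ (n + 1))⁻¹ * (n * ρ (t⁻¹ • (w - u) - e) +
        t⁻¹ * fderiv ℝ ρ (t⁻¹ • (w - u) - e) (w - u)) := by
  have key : ∀ i, fderiv ℝ (fieldX ρ u e t i) w (Pi.single i 1) =
      (t ^ (n + 1))⁻¹ * (ρ (t⁻¹ • (w - u) - e) +
        t⁻¹ * fderiv ℝ ρ (t⁻¹ • (w - u) - e) ((w - u) i • Pi.single i 1)) := by
    intro i
    have h1 : HasFDerivAt (fun w : Eu n => t⁻¹ • (w - u) - e)
        (t⁻¹ • ContinuousLinearMap.id ℝ (Eu n)) w :=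
      (((hasFDerivAt_id w).sub_const u).const_smul t⁻¹).sub_const e
    have h2 : HasFDerivAt ρ (fderiv ℝ ρ (t⁻¹ • (w - u) - e)) (t⁻¹ • (w - u) - e) :=
      (hρ.differentiable (by simp)).differentiableAt.hasFDerivAt
    have h3 := h2.comp w h1
    have h4 : HasFDerivAt (fun w : Eu n => w i - u i)
        (ContinuousLinearMap.proj (R := ℝ) (φ := fun _ : Fin n => ℝ) i) w :=
      ((ContinuousLinearMap.proj (R := ℝ) (φ := fun _ : Fin n => ℝ) i).hasFDerivAt).sub_const _
    have h5 := (h4.mul h3).const_mul (t ^ (n + 1))⁻¹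
    have h6 : fderiv ℝ (fieldX ρ u e t i) w = _ := h5.fderiv
    rw [h6]
    simp
    ring
  simp_rw [key]
  rw [← Finset.mul_sum, Finset.sum_add_distrib, ← Finset.mul_sum, ← map_sum]
  congr 2
  · simp
  · congr 2
    ext j
    simp [Finset.sum_apply, Pi.single_apply]

/-- Hölder's inequality against the constant `1` on a set of finite measure. -/
lemma holder_set {S : Set (Eu n)} (hSf : volume S ≠ ∞)
    {h : Eu n → ℝ} {q : ℝ} (hq : 1 < q) (h0 : ∀ z, 0 ≤ h z)
    (hm : AEStronglyMeasurable h (volume.restrict S))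
    (hi : IntegrableOn (fun z => h z ^ q) S volume) :
    IntegrableOn h S volume ∧
    ∫ z in S, h z ≤ (∫ z in S, h z ^ q) ^ (1 / q) * (volume.real S) ^ (1 - 1 / q) := by
  have hq0 : 0 < q := by linarith
  have hfin : IsFiniteMeasure (volume.restrict S) := ⟨by simpa using hSf.lt_top⟩
  have hL : MemLp h (ENNReal.ofReal q) (volume.restrict S) := by
    rw [← integrable_norm_rpow_iff hm (by simpa using hq0) (by simp)]
    rw [ENNReal.toReal_ofReal hq0.le]
    refine hi.congr (Eventually.of_forall fun z => ?_)
    simp [abs_of_nonneg (h0 z)]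
  refine ⟨?_, ?_⟩
  · exact hL.integrable (by simpa using hq.le)
  · have hc : q.HolderConjugate (Real.conjExponent q) := Real.HolderConjugate.conjExponent hq
    have := integral_mul_le_Lp_mul_Lq_of_nonneg (μ := volume.restrict S) hc (f := h)
      (g := fun _ => 1) (Eventually.of_forall h0) (Eventually.of_forall fun _ => zero_le_one) hL
      (memLp_const _)
    simp only [mul_one, Real.one_rpow] at this
    have h2 : 1 / Real.conjExponent q = 1 - 1 / q := by
      have := hc.inv_add_inv_eq_one
      simp only [one_div]; linarith
    rw [h2] at this
    simpa [measureReal_def] using this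

/-- The mollified average of `F` near the vertex `u`, at scale `t`, in the direction `e`. -/
def avgK (K : Set (Eu n)) (ρ F : Eu n → ℝ) (u e : Eu n) (t : ℝ) : ℝ :=
  ∫ w in K, F w * ((t ^ n)⁻¹ * ρ (t⁻¹ • (w - u) - e))

/-- The kernel at scale `t` lives on the cube with center `u + t e` and radius `t`, which has `u`
within distance `2t` of all its points when `‖e‖ ≤ 1`. -/
lemma kern_support {ρ : Eu n → ℝ} (hs : ∀ z, 1 < ‖z‖ → ρ z = 0) {u e w : Eu n} {t : ℝ}
    (ht : 0 < t) (hw : ρ (t⁻¹ • (w - u) - e) ≠ 0) : w ∈ Metric.closedBall (u + t • e) t := by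
  have h1 : ‖t⁻¹ • (w - u) - e‖ ≤ 1 := by
    by_contra! h; exact hw (hs _ h)
  rw [mem_closedBall_iff_norm]
  have : w - (u + t • e) = t • (t⁻¹ • (w - u) - e) := by
    rw [smul_sub, smul_inv_smul₀ ht.ne']; abel
  rw [this, norm_smul, Real.norm_of_nonneg ht.le]
  nlinarith

/-- Differentiation under the integral sign; the formula keeps the kernel in the form that
`sum_fderiv_fieldX` recognizes as a divergence. -/
lemma hasDerivAt_avgK {ρ : Eu n → ℝ} (hρ : ContDiff ℝ (⊤ : ℕ∞) ρ)
    (hs : ∀ z, 1 < ‖z‖ → ρ z = 0) {K : Set (Eu n)} (hK : IsCompact K)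
    {F : Eu n → ℝ} (hF : ContinuousOn F K) (u e : Eu n) {t : ℝ} (ht : 0 < t) :
    HasDerivAt (avgK K ρ F u e) (∫ w in K, F w * (-((t ^ (n + 1))⁻¹ *
      (n * ρ (t⁻¹ • (w - u) - e) +
        t⁻¹ * fderiv ℝ ρ (t⁻¹ • (w - u) - e) (w - u))))) t := by
  have hcs : HasCompactSupport ρ := by
    refine HasCompactSupport.intro (isCompact_closedBall (0 : Eu n) 1) fun z hz => hs z ?_
    simpa using hz
  obtain ⟨A, hA⟩ := hρ.continuous.bounded_above_of_compact_support hcs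
  obtain ⟨A', hA'⟩ := (hρ.continuous_fderiv (by simp)).bounded_above_of_compact_support
    (hcs.fderiv (𝕜 := ℝ))
  obtain ⟨M, hM⟩ := hK.exists_bound_of_continuousOn hF
  obtain ⟨R, hR⟩ := hK.exists_bound_of_continuousOn (f := fun w => w - u) (by fun_prop)
  have hKm : MeasurableSet K := hK.measurableSet
  have hmK : ∀ k : Eu n → ℝ, Continuous k → ContinuousOn (fun w => F w * k w) K :=
    fun k hk => hF.mul hk.continuousOn
  have hρc := hρ.continuous
  have hfc := hρ.continuous_fderiv (by simp)
  have c1 : ∀ s : ℝ, Continuous fun w : Eu n => (s ^ n)⁻¹ * ρ (s⁻¹ • (w - u) - e) := by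
    intro s; fun_prop
  have c2 : ∀ s : ℝ, Continuous fun w : Eu n => (-((s ^ (n + 1))⁻¹ *
      (n * ρ (s⁻¹ • (w - u) - e) +
        s⁻¹ * fderiv ℝ ρ (s⁻¹ • (w - u) - e) (w - u)))) := by
    intro s
    have : Continuous fun w : Eu n => fderiv ℝ ρ (s⁻¹ • (w - u) - e) (w - u) := by
      apply Continuous.clm_apply
      · exact hfc.comp (by fun_prop)
      · fun_prop
    fun_prop
  have hpos : ∀ s ∈ Ioi (t / 2), 0 < s := fun s hs => by
    have : t / 2 < s := hs
    linarith
  refine (hasDerivAt_integral_of_dominated_loc_of_deriv_le (μ := volume.restrict K)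
    (s := Ioi (t / 2))
    (bound := fun _ => M * ((((t/2) ^ (n + 1))⁻¹ * (n * A + (t/2)⁻¹ * (A' * R)))))
    (F := fun t w => F w * ((t ^ n)⁻¹ * ρ (t⁻¹ • (w - u) - e)))
    (F' := fun t w => F w * (-((t ^ (n + 1))⁻¹ *
      (n * ρ (t⁻¹ • (w - u) - e) +
        t⁻¹ * fderiv ℝ ρ (t⁻¹ • (w - u) - e) (w - u)))))
    (Ioi_mem_nhds (by linarith)) ?_ ?_ ?_ ?_ ?_ ?_).2
  · exact Eventually.of_forall fun s => (hmK _ (c1 s)).aestronglyMeasurable hKm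
  · exact (hmK _ (c1 t)).integrableOn_compact hK
  · exact (hmK _ (c2 t)).aestronglyMeasurable hKm
  · refine (ae_restrict_iff' hKm).2 (Eventually.of_forall fun w hw s hs' => ?_)
    have hs0 := hpos s hs'
    have hs1 : t / 2 ≤ s := le_of_lt hs'
    have hM0 : 0 ≤ M := (norm_nonneg _).trans (hM w hw)
    have hA0 : 0 ≤ A := (norm_nonneg _).trans (hA 0)
    have hA0' : 0 ≤ A' := (norm_nonneg _).trans (hA' 0)
    have hR0 : 0 ≤ R := (norm_nonneg _).trans (hR w hw)
    rw [norm_mul, norm_neg, norm_mul, norm_inv, norm_pow, Real.norm_of_nonneg hs0.le]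
    gcongr
    · exact hM w hw
    · refine (norm_add_le _ _).trans ?_
      rw [norm_mul, norm_mul, Real.norm_natCast, norm_inv, Real.norm_of_nonneg hs0.le]
      gcongr
      · exact hA _
      · exact (ContinuousLinearMap.le_opNorm _ _).trans
          (mul_le_mul (hA' _) (hR w hw) (norm_nonneg _) hA0')
  · have : IsFiniteMeasure (volume.restrict K) := ⟨by simpa using hK.measure_lt_top⟩
    exact integrable_const _
  · exact Eventually.of_forall fun w s hs' =>
      (hasDerivAt_kern hρ u e w (hpos s hs')).const_mul (F w)

/-- The `t`-derivative of the averages is at most a multiple of `t⁻ⁿ ∫ ‖g‖` over the cube carrying the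
kernel: the kernel derivative is a divergence, so the weak gradient can be moved onto `F`. -/
lemma deriv_avgK_bound {ρ : Eu n → ℝ} (hρ : ContDiff ℝ (⊤ : ℕ∞) ρ)
    (hs : ∀ z, 1 < ‖z‖ → ρ z = 0) (h0 : ∀ z, 0 ≤ ρ z) {C0 : ℝ} (hC0 : ∀ z, ρ z ≤ C0)
    {Ω K : Set (Eu n)} (hΩ : IsOpen Ω) (hK : IsCompact K) (hKΩ : K ⊆ Ω)
    {F : Eu n → ℝ} {g : Eu n → Eu n} (hF : ContinuousOn F K) (hg : HasWeakGradOn F g Ω)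
    {u e : Eu n} (he : ‖e‖ ≤ 1) {t : ℝ} (ht : 0 < t)
    (hS : Metric.closedBall (u + t • e) t ⊆ K) :
    |∫ w in K, F w * (-((t ^ (n + 1))⁻¹ *
      (n * ρ (t⁻¹ • (w - u) - e) +
        t⁻¹ * fderiv ℝ ρ (t⁻¹ • (w - u) - e) (w - u))))| ≤
      n * (2 * t * (t ^ (n + 1))⁻¹ * C0 * ∫ w in Metric.closedBall (u + t • e) t, ‖g w‖) := by
  set S := Metric.closedBall (u + t • e) t with hSdef
  have hX0 : ∀ i, ∀ w ∉ S, fieldX ρ u e t i w = 0 := by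
    intro i w hw
    have : ρ (t⁻¹ • (w - u) - e) = 0 := by
      by_contra h
      exact hw (kern_support hs ht h)
    simp [fieldX, this]
  have hts : ∀ i, tsupport (fieldX ρ u e t i) ⊆ S := by
    intro i
    refine closure_minimal (fun w hw => ?_) Metric.isClosed_closedBall
    by_contra h
    exact hw (hX0 i w h)
  have hXK : ∀ i, ∀ w ∉ K, fderiv ℝ (fieldX ρ u e t i) w (Pi.single i 1) = 0 := by
    intro i w hw
    rw [fderiv_of_notMem_tsupport (𝕜 := ℝ) (fun h => hw (hS (hts i h)))]
    rfl
  have hcd : ∀ i, Continuous fun w => fderiv ℝ (fieldX ρ u e t i) w (Pi.single i 1) := fun i =>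
    ((contDiff_fieldX hρ u e t i).continuous_fderiv (by simp)).clm_apply continuous_const
  have hstep : ∫ w in K, F w * (-((t ^ (n + 1))⁻¹ *
      (n * ρ (t⁻¹ • (w - u) - e) +
        t⁻¹ * fderiv ℝ ρ (t⁻¹ • (w - u) - e) (w - u)))) =
      ∑ i, ∫ w in S, g w i * fieldX ρ u e t i w := by
    have e1 : ∀ w, F w * (-((t ^ (n + 1))⁻¹ *
      (n * ρ (t⁻¹ • (w - u) - e) +
        t⁻¹ * fderiv ℝ ρ (t⁻¹ • (w - u) - e) (w - u)))) =
        ∑ i, -(F w * fderiv ℝ (fieldX ρ u e t i) w (Pi.single i 1)) := by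
      intro w
      rw [← sum_fderiv_fieldX hρ, Finset.sum_neg_distrib, ← Finset.mul_sum, mul_neg]
    simp_rw [e1]
    rw [integral_finsetSum]
    · refine Finset.sum_congr rfl fun i _ => ?_
      rw [integral_neg]
      have a1 : ∫ w in K, F w * fderiv ℝ (fieldX ρ u e t i) w (Pi.single i 1) =
          ∫ w in Ω, F w * fderiv ℝ (fieldX ρ u e t i) w (Pi.single i 1) :=
        (setIntegral_eq_of_subset_of_forall_sdiff_eq_zero hΩ.measurableSet hKΩ
          fun w hw => by rw [hXK i w hw.2, mul_zero]).symm
      have a2 : ∫ w in Ω, g w i * fieldX ρ u e t i w = ∫ w in S, g w i * fieldX ρ u e t i w :=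
        setIntegral_eq_of_subset_of_forall_sdiff_eq_zero hΩ.measurableSet (hS.trans hKΩ)
          fun w hw => by rw [hX0 i w hw.2, mul_zero]
      rw [a1, hg.2.2 _ (contDiff_fieldX hρ u e t i) ?_ ((hts i).trans (hS.trans hKΩ)) i, a2,
        neg_neg]
      exact HasCompactSupport.intro (isCompact_closedBall _ _) (hX0 i)
    · intro i _
      exact ((hF.mul (hcd i).continuousOn).integrableOn_compact hK).neg
  have hgS : IntegrableOn g S volume :=
    hg.2.1.integrableOn_compact_subset (hS.trans hKΩ) (isCompact_closedBall _ _)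
  have hC00 : 0 ≤ C0 := (h0 0).trans (hC0 0)
  rw [hstep]
  refine (Finset.abs_sum_le_sum_abs _ _).trans ?_
  have : ∀ i ∈ (Finset.univ : Finset (Fin n)), |∫ w in S, g w i * fieldX ρ u e t i w| ≤
      2 * t * (t ^ (n + 1))⁻¹ * C0 * ∫ w in S, ‖g w‖ := by
    intro i _
    rw [← integral_const_mul, ← Real.norm_eq_abs]
    refine norm_integral_le_of_norm_le (hgS.norm.const_mul _) ?_
    refine (ae_restrict_iff' Metric.isClosed_closedBall.measurableSet).2
      (Eventually.of_forall fun w hw => ?_)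
    have b1 : ‖w - u‖ ≤ 2 * t := by
      have h1 : ‖w - (u + t • e)‖ ≤ t := by rwa [← mem_closedBall_iff_norm]
      have h2 : ‖t • e‖ ≤ t := by
        rw [norm_smul, Real.norm_of_nonneg ht.le]; nlinarith
      calc ‖w - u‖ = ‖(w - (u + t • e)) + t • e‖ := by congr 1; abel
        _ ≤ _ := norm_add_le _ _
        _ ≤ 2 * t := by linarith
    have b2 : ‖w i - u i‖ ≤ 2 * t := (norm_le_pi_norm (w - u) i).trans b1
    have b3 : ‖g w i‖ ≤ ‖g w‖ := norm_le_pi_norm (g w) i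
    unfold fieldX
    rw [norm_mul, norm_mul, norm_mul, norm_inv, norm_pow, Real.norm_of_nonneg ht.le,
      Real.norm_of_nonneg (h0 _)]
    calc ‖g w i‖ * ((t ^ (n + 1))⁻¹ * (‖w i - u i‖ * ρ (t⁻¹ • (w - u) - e)))
        ≤ ‖g w‖ * ((t ^ (n + 1))⁻¹ * ((2 * t) * C0)) := by
          gcongr
          · exact mul_nonneg (by positivity) (mul_nonneg (norm_nonneg _) (h0 _))
          · exact h0 _
          · exact hC0 _
      _ = _ := by ring
  refine (Finset.sum_le_sum this).trans ?_
  simp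

/-- Mass one of the kernel. -/
lemma integral_kern {ρ : Eu n → ℝ} (h1 : ∫ z, ρ z = 1) (u e : Eu n) {t : ℝ} (ht : 0 < t) :
    ∫ w, (t ^ n)⁻¹ * ρ (t⁻¹ • (w - u) - e) = 1 := by
  rw [integral_const_mul, integral_sub_right_eq_self (fun w : Eu n => ρ (t⁻¹ • w - e)) u,
    Measure.integral_comp_inv_smul volume (fun w : Eu n => ρ (w - e)) t,
    integral_sub_right_eq_self ρ e, h1]
  simp [abs_of_pos ht]
  field_simp

/-- By continuity of `F`, the averages recover the value at the vertex as the scale shrinks. -/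
lemma avgK_tendsto {ρ : Eu n → ℝ} (hρ : ContDiff ℝ (⊤ : ℕ∞) ρ)
    (hs : ∀ z, 1 < ‖z‖ → ρ z = 0) (h0 : ∀ z, 0 ≤ ρ z) (h1 : ∫ z, ρ z = 1)
    {K : Set (Eu n)} (hK : IsCompact K)
    {F : Eu n → ℝ} (hF : ContinuousOn F K) {u e : Eu n} (he : ‖e‖ ≤ 1) (hu : u ∈ K) {r : ℝ}
    (hr : 0 < r) (hS : ∀ t, 0 < t → t ≤ r → Metric.closedBall (u + t • e) t ⊆ K) :
    Tendsto (avgK K ρ F u e) (nhdsWithin 0 (Ioi 0)) (nhds (F u)) := by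
  rw [Metric.tendsto_nhds]
  intro ε hε
  obtain ⟨d, hd, hd'⟩ := Metric.continuousWithinAt_iff.1 (hF u hu) (ε / 2) (by positivity)
  have hm : Ioo (0 : ℝ) (min r (d / 2)) ∈ nhdsWithin (0 : ℝ) (Ioi 0) :=
    Ioo_mem_nhdsGT (by positivity)
  filter_upwards [hm] with t ht
  have ht0 : 0 < t := ht.1
  have htr : t ≤ r := ht.2.le.trans (min_le_left _ _)
  have htd : 2 * t < d := by have := ht.2.trans_le (min_le_right _ _); linarith
  have hρc := hρ.continuous
  have c1 : Continuous fun w : Eu n => (t ^ n)⁻¹ * ρ (t⁻¹ • (w - u) - e) := by fun_prop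
  have hker : ∫ w in K, (t ^ n)⁻¹ * ρ (t⁻¹ • (w - u) - e) = 1 := by
    rw [← integral_kern h1 u e ht0]
    refine setIntegral_eq_integral_of_forall_compl_eq_zero fun w hw => ?_
    have : ρ (t⁻¹ • (w - u) - e) = 0 := by
      by_contra h
      exact hw (hS t ht0 htr (kern_support hs ht0 h))
    rw [this, mul_zero]
  have i1 : IntegrableOn (fun w : Eu n => (t ^ n)⁻¹ * ρ (t⁻¹ • (w - u) - e)) K :=
    c1.continuousOn.integrableOn_compact hK
  have i2 : IntegrableOn (fun w : Eu n => F w * ((t ^ n)⁻¹ * ρ (t⁻¹ • (w - u) - e))) K :=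
    (hF.mul c1.continuousOn).integrableOn_compact hK
  have key : avgK K ρ F u e t - F u =
      ∫ w in K, (F w - F u) * ((t ^ n)⁻¹ * ρ (t⁻¹ • (w - u) - e)) := by
    simp_rw [sub_mul]
    rw [integral_sub i2 (i1.const_mul _), integral_const_mul, hker, mul_one]
    rfl
  rw [Real.dist_eq, key, ← Real.norm_eq_abs]
  have : ‖∫ w in K, (F w - F u) * ((t ^ n)⁻¹ * ρ (t⁻¹ • (w - u) - e))‖ ≤
      ∫ w in K, (ε / 2) * ((t ^ n)⁻¹ * ρ (t⁻¹ • (w - u) - e)) := by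
    refine norm_integral_le_of_norm_le (i1.const_mul _) ?_
    refine (ae_restrict_iff' hK.measurableSet).2 (Eventually.of_forall fun w hw => ?_)
    have hn : 0 ≤ (t ^ n)⁻¹ * ρ (t⁻¹ • (w - u) - e) :=
      mul_nonneg (by positivity) (h0 _)
    rw [norm_mul, Real.norm_of_nonneg hn]
    by_cases hz : ρ (t⁻¹ • (w - u) - e) = 0
    · simp [hz]
    · refine mul_le_mul_of_nonneg_right ?_ hn
      refine (hd' hw ?_).le
      have g1 := kern_support hs ht0 hz
      rw [mem_closedBall_iff_norm] at g1
      have h2 : ‖t • e‖ ≤ t := by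
        rw [norm_smul, Real.norm_of_nonneg ht0.le]; nlinarith
      rw [dist_eq_norm]
      calc ‖w - u‖ = ‖(w - (u + t • e)) + t • e‖ := by congr 1; abel
        _ ≤ _ := norm_add_le _ _
        _ < d := by linarith
  rw [integral_const_mul, hker, mul_one] at this
  linarith

/-- Morrey's estimate for the vertex value against the average at scale `r`: Hölder's inequality turns
`deriv_avgK_bound` into the bound `t ^ (-n/q)`, which is integrable at `0` because `n < q`. -/
lemma avgK_sub_le {ρ : Eu n → ℝ} (hρ : ContDiff ℝ (⊤ : ℕ∞) ρ)
    (hs : ∀ z, 1 < ‖z‖ → ρ z = 0) (h0 : ∀ z, 0 ≤ ρ z) {C0 : ℝ} (hC0 : ∀ z, ρ z ≤ C0)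
    (h1 : ∫ z, ρ z = 1) (hn : 0 < n) {q : ℝ} (hq : (n : ℝ) < q)
    {Ω K : Set (Eu n)} (hΩ : IsOpen Ω) (hK : IsCompact K) (hKΩ : K ⊆ Ω)
    {F : Eu n → ℝ} {g : Eu n → Eu n} (hF : ContinuousOn F K) (hg : HasWeakGradOn F g Ω)
    (hgq : IntegrableOn (fun z => ‖g z‖ ^ q) K volume)
    {u e : Eu n} (he : ‖e‖ ≤ 1) (hu : u ∈ K) {r : ℝ} (hr : 0 < r)
    (hS : ∀ t, 0 < t → t ≤ r → Metric.closedBall (u + t • e) t ⊆ K) :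
    |avgK K ρ F u e r - F u| ≤ (n * 2 * C0 * 2 ^ (n * (1 - 1 / q)) / (1 - n / q)) *
      r ^ (1 - n / q) * (∫ z in K, ‖g z‖ ^ q) ^ (1 / q) := by
  have hn1 : (1 : ℝ) ≤ n := by exact_mod_cast hn
  have hq1 : 1 < q := by linarith
  have hq0 : 0 < q := by linarith
  have hC00 : 0 ≤ C0 := (h0 0).trans (hC0 0)
  have hexp : 0 < 1 - n / q := by
    rw [sub_pos, div_lt_one hq0]; exact hq
  set J := (∫ z in K, ‖g z‖ ^ q) ^ (1 / q) with hJ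
  have hJ0 : 0 ≤ J := Real.rpow_nonneg (integral_nonneg fun z => by positivity) _
  set M1 : ℝ := n * 2 * C0 * 2 ^ (n * (1 - 1 / q)) with hM1
  have hM10 : 0 ≤ M1 := by positivity
  -- the derivative of the averages is controlled by an integrable power of `t`
  have hbound : ∀ t, 0 < t → t ≤ r → ∃ d, HasDerivAt (avgK K ρ F u e) d t ∧
      |d| ≤ M1 * J * t ^ (-(n / q)) := by
    intro t ht htr
    refine ⟨_, hasDerivAt_avgK hρ hs hK hF u e ht,
      (deriv_avgK_bound hρ hs h0 hC0 hΩ hK hKΩ hF hg he ht (hS t ht htr)).trans ?_⟩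
    have hSK := hS t ht htr
    have hmeas : AEStronglyMeasurable (fun z => ‖g z‖)
        (volume.restrict (Metric.closedBall (u + t • e) t)) :=
      (hg.2.1.integrableOn_compact_subset (hSK.trans hKΩ)
        (isCompact_closedBall _ _)).norm.aestronglyMeasurable
    have hh := (holder_set (S := Metric.closedBall (u + t • e) t)
      (h := fun z => ‖g z‖) measure_closedBall_lt_top.ne hq1
      (fun z => norm_nonneg _) hmeas (hgq.mono_set hSK)).2
    have hJS : (∫ z in Metric.closedBall (u + t • e) t, ‖g z‖ ^ q) ^ (1 / q) ≤ J := by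
      refine Real.rpow_le_rpow (integral_nonneg fun z => by positivity) ?_ (by positivity)
      exact setIntegral_mono_set hgq (Eventually.of_forall fun z => by positivity)
        (LE.le.eventuallyLE hSK)
    have hvol : volume.real (Metric.closedBall (u + t • e) t) = (2 * t) ^ n := by
      rw [measureReal_def, Real.volume_pi_closedBall _ ht.le]
      simp [ENNReal.toReal_ofReal, ht.le]
    rw [hvol] at hh
    have hpw : ((2 * t) ^ n : ℝ) ^ (1 - 1 / q) =
        2 ^ (n * (1 - 1 / q)) * (t ^ n * t ^ (-(n / q))) := by
      rw [← Real.rpow_natCast, ← Real.rpow_mul (by positivity),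
        Real.mul_rpow (by norm_num) ht.le, ← Real.rpow_natCast t n, ← Real.rpow_add ht]
      congr 2
      ring
    calc n * (2 * t * (t ^ (n + 1))⁻¹ * C0 * ∫ w in Metric.closedBall (u + t • e) t, ‖g w‖)
        ≤ n * (2 * t * (t ^ (n + 1))⁻¹ * C0 *
            (J * (2 ^ (n * (1 - 1 / q)) * (t ^ n * t ^ (-(n / q)))))) := by
          rw [← hpw]
          gcongr
          exact hh.trans (by gcongr)
      _ = M1 * J * t ^ (-(n / q)) := by
          rw [hM1]; field_simp; ring
  -- comparison with the primitive of that power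
  set D := M1 / (1 - n / q) * J with hD
  have hD0 : 0 ≤ D := by positivity
  have hB : ∀ t, 0 < t → HasDerivAt (fun t : ℝ => D * t ^ (1 - n / q))
      (M1 * J * t ^ (-(n / q))) t := by
    intro t ht
    have := (Real.hasDerivAt_rpow_const (x := t) (p := 1 - n / q) (Or.inl ht.ne')).const_mul D
    refine this.congr_deriv ?_
    rw [hD, show (1 - n / q - 1 : ℝ) = -(n / q) by ring]
    calc M1 / (1 - n / q) * J * ((1 - n / q) * t ^ (-(n / q)))
        = M1 * J * t ^ (-(n / q)) * ((1 - n / q) / (1 - n / q)) := by ring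
      _ = _ := by rw [div_self hexp.ne', mul_one]
  -- the primitive plus or minus the average is monotone, which needs no integrability of the
  -- derivative of the average
  have hmono : ∀ σ : ℝ, |σ| = 1 → MonotoneOn
      (fun t => D * t ^ (1 - n / q) + σ * avgK K ρ F u e t) (Ioc 0 r) := by
    intro σ hσ
    have hd : ∀ t ∈ Ioc 0 r, ∃ d, 0 ≤ d ∧ HasDerivAt
        (fun t => D * t ^ (1 - n / q) + σ * avgK K ρ F u e t) d t := by
      intro t ht
      obtain ⟨d, hd, hdb⟩ := hbound t ht.1 ht.2
      refine ⟨_, ?_, (hB t ht.1).add (hd.const_mul σ)⟩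
      have : |σ * d| ≤ M1 * J * t ^ (-(n / q)) := by rw [abs_mul, hσ, one_mul]; exact hdb
      linarith [(abs_le.1 this).1]
    refine monotoneOn_of_deriv_nonneg (convex_Ioc _ _) ?_ ?_ ?_
    · intro t ht
      obtain ⟨d, -, hd⟩ := hd t ht
      exact hd.continuousAt.continuousWithinAt
    · intro t ht
      obtain ⟨d, -, hd⟩ := hd t (interior_subset ht)
      exact hd.differentiableAt.differentiableWithinAt
    · intro t ht
      obtain ⟨d, h, hd⟩ := hd t (interior_subset ht)
      rw [hd.deriv]; exact h
  have hfin : ∀ τ ∈ Ioc 0 r, |avgK K ρ F u e r - avgK K ρ F u e τ| ≤ D * r ^ (1 - n / q) := by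
    intro τ hτ
    have m1 := hmono 1 (by simp) hτ ⟨hr, le_rfl⟩ hτ.2
    have m2 := hmono (-1) (by simp) hτ ⟨hr, le_rfl⟩ hτ.2
    have : 0 ≤ D * τ ^ (1 - n / q) := mul_nonneg hD0 (Real.rpow_nonneg hτ.1.le _)
    simp only at m1 m2
    rw [abs_le]
    constructor <;> linarith
  have hlim := avgK_tendsto hρ hs h0 h1 hK hF he hu hr hS
  have hlim2 : Tendsto (fun τ => |avgK K ρ F u e r - avgK K ρ F u e τ|)
      (nhdsWithin 0 (Ioi 0)) (nhds |avgK K ρ F u e r - F u|) :=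
    (tendsto_const_nhds.sub hlim).abs
  have := le_of_tendsto hlim2 (by
    filter_upwards [Ioc_mem_nhdsGT hr] with τ hτ using hfin τ hτ)
  refine this.trans (le_of_eq ?_)
  rw [hD]; ring

/-- Morrey's inequality on cubes, for continuous functions with a weak gradient. -/
lemma morrey (n : ℕ) (hn : 0 < n) (q : ℝ) (hq : (n : ℝ) < q) :
    ∃ M : ℝ, 0 < M ∧ ∀ (Ω : Set (Eu n)), IsOpen Ω → ∀ (F : Eu n → ℝ) (g : Eu n → Eu n),
      ContinuousOn F Ω → HasWeakGradOn F g Ω → ∀ (a : Eu n) (r : ℝ), 0 < r →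
      Metric.closedBall a r ⊆ Ω →
      IntegrableOn (fun z => ‖g z‖ ^ q) (Metric.closedBall a r) volume →
      ∀ u ∈ Metric.closedBall a r, |F a - F u| ≤
        M * r ^ (1 - n / q) * (∫ z in Metric.closedBall a r, ‖g z‖ ^ q) ^ (1 / q) := by
  obtain ⟨ρ, C0, hρ, hs, h0, hC0, h1⟩ := exists_bump n
  have hq0 : 0 < q := lt_of_le_of_lt (Nat.cast_nonneg n) hq
  have hC00 : 0 ≤ C0 := (h0 0).trans (hC0 0)
  have hexp : 0 < 1 - n / q := by
    rw [sub_pos, div_lt_one hq0]; exact hq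
  set M := (n * 2 * C0 * 2 ^ (n * (1 - 1 / q)) / (1 - n / q)) with hM
  have hM0 : 0 ≤ M := by positivity
  refine ⟨2 * M + 1, by positivity, fun Ω hΩ F g hF hg a r hr hKΩ hgq u hu => ?_⟩
  set K := Metric.closedBall a r with hKdef
  have hK : IsCompact K := isCompact_closedBall _ _
  have hFK := hF.mono hKΩ
  set J := (∫ z in K, ‖g z‖ ^ q) ^ (1 / q) with hJ
  have hJ0 : 0 ≤ J := Real.rpow_nonneg (integral_nonneg fun z => by positivity) _
  -- both averages at scale `r` are the average over the same cube
  have hball : ∀ v ∈ K, |avgK K ρ F a 0 r - F v| ≤ M * r ^ (1 - n / q) * J := by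
    intro v hv
    have hv' : ‖a - v‖ ≤ r := by rw [← dist_eq_norm, dist_comm]; exact hv
    have he : ‖r⁻¹ • (a - v)‖ ≤ 1 := by
      rw [norm_smul, norm_inv, Real.norm_of_nonneg hr.le, inv_mul_le_iff₀ hr, mul_one]
      exact hv'
    have hSv : ∀ t, 0 < t → t ≤ r → Metric.closedBall (v + t • r⁻¹ • (a - v)) t ⊆ K := by
      intro t ht htr
      refine Metric.closedBall_subset_closedBall' ?_
      rw [dist_eq_norm]
      have : v + t • r⁻¹ • (a - v) - a = (t * r⁻¹ - 1) • (a - v) := by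
        rw [smul_smul, sub_smul, one_smul]; abel
      rw [this, norm_smul, Real.norm_of_nonpos, neg_sub]
      · have h2 : 0 ≤ 1 - t * r⁻¹ := by
          rw [sub_nonneg, ← div_eq_mul_inv, div_le_one hr]; exact htr
        have h3 := mul_le_mul_of_nonneg_left hv' h2
        have h4 : (1 - t * r⁻¹) * r = r - t := by field_simp
        linarith
      · rw [sub_nonpos, ← div_eq_mul_inv, div_le_one hr]; exact htr
    have := avgK_sub_le hρ hs h0 hC0 h1 hn hq hΩ hK hKΩ hFK hg hgq he hv hr hSv
    have heq : avgK K ρ F v (r⁻¹ • (a - v)) r = avgK K ρ F a 0 r := by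
      unfold avgK
      congr 1
      ext w
      congr 3
      rw [← smul_sub, sub_zero]
      congr 1
      abel
    rwa [heq] at this
  have ha := hball a (Metric.mem_closedBall_self hr.le)
  have hu' := hball u hu
  have hnn : 0 ≤ r ^ (1 - n / q) * J := by positivity
  calc |F a - F u| = |(avgK K ρ F a 0 r - F u) - (avgK K ρ F a 0 r - F a)| := by ring_nf
    _ ≤ _ := abs_sub _ _
    _ ≤ (2 * M + 1) * r ^ (1 - n / q) * J := by nlinarith

/-! ### Distance to the boundary and the subhyperbolic metric -/

lemma bdist_pos {Ω : Set (Eu n)} (hΩ : IsOpen Ω) (hf : (frontier Ω).Nonempty) {z : Eu n}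
    (hz : z ∈ Ω) : 0 < bdist Ω z := by
  refine (isClosed_frontier.notMem_iff_infDist_pos hf).1 fun h => ?_
  exact (disjoint_frontier_iff_isOpen.2 hΩ).le_bot ⟨h, hz⟩

lemma bdist_le_add (Ω : Set (Eu n)) (z w : Eu n) : bdist Ω z ≤ bdist Ω w + ‖z - w‖ := by
  rw [← dist_eq_norm]
  exact Metric.infDist_le_infDist_add_dist

lemma continuous_bdist (Ω : Set (Eu n)) : Continuous (bdist Ω) :=
  Metric.continuous_infDist_pt _

lemma eq_univ_of_frontier {Ω : Set (Eu n)} (hne : Ω.Nonempty)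
    (hf : ¬ (frontier Ω).Nonempty) : Ω = univ := by
  rw [not_nonempty_iff_eq_empty] at hf
  exact (isClopen_iff_frontier_eq_empty.2 hf).eq_univ hne

/-- A cube is connected, so if it meets `Ω` and misses `∂Ω` then it lies in `Ω`. -/
lemma closedBall_subset_of_lt {Ω : Set (Eu n)} (hΩ : IsOpen Ω) {z : Eu n} (hz : z ∈ Ω)
    {r : ℝ} (hr : 0 ≤ r)
    (h : r < bdist Ω z) : Metric.closedBall z r ⊆ Ω := by
  refine (convex_closedBall z r).isPreconnected.subset_left_of_subset_union hΩ
    isClosed_closure.isOpen_compl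
    (disjoint_compl_right.mono_left subset_closure) (fun w hw => ?_)
    ⟨z, Metric.mem_closedBall_self hr, hz⟩
  by_contra hcon
  simp only [mem_union, mem_compl_iff, not_or, not_not] at hcon
  have hwf : w ∈ frontier Ω := by rw [hΩ.frontier_eq]; exact ⟨hcon.2, hcon.1⟩
  have h1 : bdist Ω z ≤ dist z w := Metric.infDist_le_dist_of_mem hwf
  have h2 : dist w z ≤ r := hw
  rw [dist_comm] at h2
  linarith

lemma subLenSet_nonneg {Ω : Set (Eu n)} {α : ℝ} {x y : Eu n} {d : ℝ}
    (hd : d ∈ subLenSet Ω α x y) : 0 ≤ d := by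
  obtain ⟨L, γ, hL, -, -, -, -, -, rfl⟩ := hd
  exact intervalIntegral.integral_nonneg hL fun s _ => Real.rpow_nonneg Metric.infDist_nonneg _

lemma dSub_nonneg (Ω : Set (Eu n)) (α : ℝ) (x y : Eu n) : 0 ≤ dSub Ω α x y :=
  Real.sInf_nonneg fun _ hd => subLenSet_nonneg hd

lemma dSub_le {Ω : Set (Eu n)} {α : ℝ} {x y : Eu n} {d : ℝ}
    (hd : d ∈ subLenSet Ω α x y) : dSub Ω α x y ≤ d :=
  csInf_le ⟨0, fun _ h => subLenSet_nonneg h⟩ hd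

/-- Lengths add under concatenation of curves. -/
lemma subLenSet_concat {Ω : Set (Eu n)} {α : ℝ} {x y z : Eu n} {a b : ℝ}
    (ha : a ∈ subLenSet Ω α x y) (hb : b ∈ subLenSet Ω α y z) :
    a + b ∈ subLenSet Ω α x z := by
  obtain ⟨L, γ, hL, hlip, h0, h1, hm, hi, rfl⟩ := ha
  obtain ⟨L', γ', hL', hlip', h0', h1', hm', hi', rfl⟩ := hb
  set η : ℝ → Eu n := fun s => if s ≤ L then γ s else γ' (s - L) with hη
  have e1 : ∀ s, s ≤ L → η s = γ s := fun s hs => by simp [hη, hs]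
  have e2 : ∀ s, L ≤ s → η s = γ' (s - L) := fun s hs => by
    rcases hs.eq_or_lt with rfl | hs
    · simp [hη, h1, h0']
    · simp [hη, not_le.2 hs]
  have hdist : ∀ s t, 0 ≤ s → s ≤ t → t ≤ L + L' → dist (η s) (η t) ≤ t - s := by
    intro s t hs hst ht
    have f1 : ∀ s t, 0 ≤ s → s ≤ t → t ≤ L → dist (γ s) (γ t) ≤ t - s := by
      intro s t hs hst ht
      have := hlip.dist_le_mul s ⟨hs, hst.trans ht⟩ t ⟨hs.trans hst, ht⟩
      rw [NNReal.coe_one, one_mul, Real.dist_eq, abs_sub_comm,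
        abs_of_nonneg (sub_nonneg.2 hst)] at this
      exact this
    have f2 : ∀ s t, 0 ≤ s → s ≤ t → t ≤ L' → dist (γ' s) (γ' t) ≤ t - s := by
      intro s t hs hst ht
      have := hlip'.dist_le_mul s ⟨hs, hst.trans ht⟩ t ⟨hs.trans hst, ht⟩
      rw [NNReal.coe_one, one_mul, Real.dist_eq, abs_sub_comm,
        abs_of_nonneg (sub_nonneg.2 hst)] at this
      exact this
    rcases le_total t L with htL | htL
    · rw [e1 t htL, e1 s (hst.trans htL)]
      exact f1 s t hs hst htL
    · rcases le_total s L with hsL | hsL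
      · rw [e1 s hsL, e2 t htL]
        have g1 := f1 s L hs hsL le_rfl
        have g2 := f2 0 (t - L) le_rfl (by linarith) (by linarith)
        rw [h1] at g1
        rw [h0'] at g2
        have := dist_triangle (γ s) y (γ' (t - L))
        linarith
      · rw [e2 s hsL, e2 t htL]
        have := f2 (s - L) (t - L) (by linarith) (by linarith) (by linarith)
        linarith
  have hc1 : EqOn (fun s => bdist Ω (γ s) ^ (α - 1)) (fun s => bdist Ω (η s) ^ (α - 1))
      (uIcc 0 L) := fun s hs => by
    rw [uIcc_of_le hL] at hs
    simp only [e1 s hs.2]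
  have hshift : IntervalIntegrable (fun s => bdist Ω (γ' (s - L)) ^ (α - 1)) volume
      L (L + L') := by
    have := hi'.comp_sub_right L
    rwa [zero_add, add_comm L' L] at this
  have hc2 : EqOn (fun s => bdist Ω (γ' (s - L)) ^ (α - 1)) (fun s => bdist Ω (η s) ^ (α - 1))
      (uIcc L (L + L')) := fun s hs => by
    rw [uIcc_of_le (by linarith)] at hs
    simp only [e2 s hs.1]
  have i1 : IntervalIntegrable (fun s => bdist Ω (η s) ^ (α - 1)) volume 0 L :=
    IntervalIntegrable.congr (hc1.mono uIoc_subset_uIcc) hi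
  have i2 : IntervalIntegrable (fun s => bdist Ω (η s) ^ (α - 1)) volume L (L + L') :=
    IntervalIntegrable.congr (hc2.mono uIoc_subset_uIcc) hshift
  refine ⟨L + L', η, by linarith, ?_, ?_, ?_, ?_, i1.trans i2, ?_⟩
  · refine LipschitzOnWith.of_dist_le_mul fun s hs t ht => ?_
    rw [NNReal.coe_one, one_mul, Real.dist_eq]
    rcases le_total s t with h | h
    · rw [abs_sub_comm, abs_of_nonneg (sub_nonneg.2 h)]
      exact hdist s t hs.1 h ht.2
    · rw [dist_comm, abs_of_nonneg (sub_nonneg.2 h)]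
      exact hdist t s ht.1 h hs.2
  · rw [e1 0 hL, h0]
  · rw [e2 _ (by linarith), add_sub_cancel_left, h1']
  · intro s hs
    rcases le_total s L with h | h
    · rw [e1 s h]; exact hm s ⟨hs.1, h⟩
    · rw [e2 s h]; exact hm' _ ⟨by linarith, by linarith [hs.2]⟩
  · rw [← intervalIntegral.integral_add_adjacent_intervals i1 i2,
      ← intervalIntegral.integral_congr hc1, ← intervalIntegral.integral_congr hc2,
      intervalIntegral.integral_comp_sub_right (fun s => bdist Ω (γ' s) ^ (α - 1)) L]
    simp

/-- The segment is an admissible curve as soon as the weight is bounded on it. -/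
lemma subLenSet_segment {Ω : Set (Eu n)} {α : ℝ} {x z : Eu n} {W : ℝ}
    (h : ∀ p ∈ segment ℝ x z, p ∈ Ω ∧ bdist Ω p ^ (α - 1) ≤ W) :
    ∃ d ∈ subLenSet Ω α x z, d ≤ W * ‖z - x‖ := by
  set ℓ := ‖z - x‖ with hℓ
  have hℓ0 : 0 ≤ ℓ := norm_nonneg _
  set γ : ℝ → Eu n := fun s => x + (s / ℓ) • (z - x) with hγ
  have hseg : ∀ s ∈ Icc 0 ℓ, γ s ∈ segment ℝ x z := by
    intro s hs
    rw [segment_eq_image']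
    exact ⟨s / ℓ, ⟨div_nonneg hs.1 hℓ0, div_le_one_of_le₀ hs.2 hℓ0⟩, rfl⟩
  have hγc : Continuous γ := by fun_prop
  have hmeas : Measurable fun s => bdist Ω (γ s) ^ (α - 1) :=
    ((continuous_bdist Ω).comp hγc).measurable.pow_const _
  have hint : IntervalIntegrable (fun s => bdist Ω (γ s) ^ (α - 1)) volume 0 ℓ := by
    rw [intervalIntegrable_iff_integrableOn_Icc_of_le hℓ0]
    refine Measure.integrableOn_of_bounded (M := W) (by simp) hmeas.aestronglyMeasurable ?_
    refine (ae_restrict_iff' measurableSet_Icc).2 (Eventually.of_forall fun s hs => ?_)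
    have hb : 0 ≤ bdist Ω (γ s) := Metric.infDist_nonneg
    rw [Real.norm_of_nonneg (Real.rpow_nonneg hb _)]
    exact (h _ (hseg s hs)).2
  refine ⟨_, ⟨ℓ, γ, hℓ0, ?_, by simp [hγ], ?_, fun s hs => (h _ (hseg s hs)).1, hint, rfl⟩, ?_⟩
  · refine LipschitzOnWith.of_dist_le_mul fun s hs t ht => ?_
    rw [NNReal.coe_one, one_mul, dist_eq_norm, Real.dist_eq]
    have : γ s - γ t = ((s - t) / ℓ) • (z - x) := by
      simp only [hγ]; rw [_root_.sub_div, sub_smul]; abel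
    rw [this, norm_smul, ← hℓ, norm_div, Real.norm_of_nonneg hℓ0, Real.norm_eq_abs]
    rcases hℓ0.eq_or_lt with h0 | h0
    · rw [← h0]; simp
    · rw [div_mul_cancel₀ _ h0.ne']
  · rcases hℓ0.eq_or_lt with h0 | h0
    · have : z = x := by rw [← sub_eq_zero, ← norm_eq_zero, ← hℓ, ← h0]
      simp [hγ, this]
    · simp [hγ, div_self h0.ne']
  · have := intervalIntegral.integral_mono_on hℓ0 hint
      (intervalIntegrable_const (c := W)) fun s hs => (h _ (hseg s hs)).2
    simpa [mul_comm] using this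

/-- In a domain any two points are joined by a curve of finite subhyperbolic length, so that the
infimum defining `dSub` is over a nonempty set. -/
lemma subLenSet_nonempty {Ω : Set (Eu n)} (hΩ : IsOpen Ω) (hc : IsConnected Ω) {α : ℝ}
    (hα : α ≤ 1) {x y : Eu n} (hx : x ∈ Ω) (hy : y ∈ Ω) : (subLenSet Ω α x y).Nonempty := by
  have hloc : ∀ x ∈ Ω, ∃ r > 0, ∃ W, ∀ p ∈ Metric.ball x r, p ∈ Ω ∧ bdist Ω p ^ (α - 1) ≤ W := by
    intro x hx
    by_cases hf : (frontier Ω).Nonempty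
    · have hpos := bdist_pos hΩ hf hx
      refine ⟨bdist Ω x / 2, by positivity, (bdist Ω x / 2) ^ (α - 1), fun p hp => ⟨?_, ?_⟩⟩
      · exact closedBall_subset_of_lt hΩ hx (r := bdist Ω x / 2) (by positivity) (by linarith)
          (Metric.ball_subset_closedBall hp)
      · refine Real.rpow_le_rpow_of_nonpos (by positivity) ?_ (by linarith)
        have h1 := bdist_le_add Ω x p
        have h2 : ‖x - p‖ < bdist Ω x / 2 := by rw [← dist_eq_norm, dist_comm]; exact hp
        linarith
    · have hu := eq_univ_of_frontier hc.nonempty hf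
      rw [not_nonempty_iff_eq_empty] at hf
      -- `infDist` to the empty frontier is `0`, so the weight is the constant `0 ^ (α - 1)`
      refine ⟨1, one_pos, 0 ^ (α - 1), fun p _ => ⟨by rw [hu]; trivial, ?_⟩⟩
      simp [bdist, hf]
  refine hc.isPreconnected.induction₂' (fun x y => (subLenSet Ω α x y).Nonempty) ?_ ?_ hx hy
  · intro x hx
    obtain ⟨r, hr, W, hW⟩ := hloc x hx
    filter_upwards [mem_nhdsWithin_of_mem_nhds (Metric.ball_mem_nhds x hr)] with y hy
    have hsub : segment ℝ x y ⊆ Metric.ball x r :=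
      (convex_ball x r).segment_subset (Metric.mem_ball_self hr) hy
    constructor
    · obtain ⟨d, hd, -⟩ := subLenSet_segment fun p hp => hW p (hsub hp)
      exact ⟨d, hd⟩
    · rw [segment_symm] at hsub
      obtain ⟨d, hd, -⟩ := subLenSet_segment fun p hp => hW p (hsub hp)
      exact ⟨d, hd⟩
  · rintro x y z - - - ⟨a, ha⟩ ⟨b, hb⟩
    exact ⟨_, subLenSet_concat ha hb⟩

/-! ### Chains of cubes along a curve -/

/-- An arc-length parametrized curve in `Ω` with finite subhyperbolic length. -/
structure AdmCurve (Ω : Set (Eu n)) (β L : ℝ) (γ : ℝ → Eu n) : Prop where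
  nonneg : 0 ≤ L
  lip : LipschitzOnWith 1 γ (Icc 0 L)
  mem : ∀ s ∈ Icc (0 : ℝ) L, γ s ∈ Ω
  int : IntervalIntegrable (fun s => bdist Ω (γ s) ^ (β - 1)) volume 0 L

lemma AdmCurve.norm_sub_le {Ω : Set (Eu n)} {β L : ℝ} {γ : ℝ → Eu n} (h : AdmCurve Ω β L γ)
    {s t : ℝ} (hs : 0 ≤ s) (hst : s ≤ t) (ht : t ≤ L) : ‖γ t - γ s‖ ≤ t - s := by
  have := h.lip.dist_le_mul t ⟨hs.trans hst, ht⟩ s ⟨hs, hst.trans ht⟩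
  rwa [NNReal.coe_one, one_mul, Real.dist_eq, abs_of_nonneg (sub_nonneg.2 hst),
    dist_eq_norm] at this

lemma AdmCurve.int' {Ω : Set (Eu n)} {β L : ℝ} {γ : ℝ → Eu n} (h : AdmCurve Ω β L γ)
    {s t : ℝ} (hs : 0 ≤ s) (hst : s ≤ t) (ht : t ≤ L) :
    IntervalIntegrable (fun s => bdist Ω (γ s) ^ (β - 1)) volume s t :=
  h.int.mono_set (by
    rw [uIcc_of_le hst, uIcc_of_le h.nonneg]; exact Icc_subset_Icc hs ht)

lemma AdmCurve.mem_subLenSet {Ω : Set (Eu n)} {β L : ℝ} {γ : ℝ → Eu n} (h : AdmCurve Ω β L γ)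
    {t : ℝ} (ht0 : 0 ≤ t) (ht : t ≤ L) :
    (∫ s in (0:ℝ)..t, bdist Ω (γ s) ^ (β - 1)) ∈ subLenSet Ω β (γ 0) (γ t) :=
  ⟨t, γ, ht0, h.lip.mono (Icc_subset_Icc_right ht), rfl, rfl,
    fun s hs => h.mem s ⟨hs.1, hs.2.trans ht⟩, h.int' le_rfl ht0 ht, rfl⟩

lemma AdmCurve.integral_le {Ω : Set (Eu n)} {β L : ℝ} {γ : ℝ → Eu n} (h : AdmCurve Ω β L γ)
    {a s t b : ℝ} (ha : 0 ≤ a) (has : a ≤ s) (hst : s ≤ t) (htb : t ≤ b) (hb : b ≤ L) :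
    ∫ s in s..t, bdist Ω (γ s) ^ (β - 1) ≤ ∫ s in a..b, bdist Ω (γ s) ^ (β - 1) :=
  intervalIntegral.integral_mono_interval has hst htb
    (Eventually.of_forall fun _ => Real.rpow_nonneg Metric.infDist_nonneg _)
    (h.int' ha (has.trans (hst.trans htb)) hb)

/-- The subhyperbolic length of an arc is bounded below, since the distance to the boundary
grows at most linearly along it. -/
lemma AdmCurve.le_integral {Ω : Set (Eu n)} (hΩ : IsOpen Ω) (hf : (frontier Ω).Nonempty)
    {β L : ℝ} (hβ : β ≤ 1) {γ : ℝ → Eu n} (h : AdmCurve Ω β L γ) {s ℓ : ℝ} (hs : 0 ≤ s)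
    (hℓ : 0 ≤ ℓ) (hsL : s + ℓ ≤ L) :
    ℓ * (bdist Ω (γ s) + ℓ) ^ (β - 1) ≤
      ∫ t in s..(s + ℓ), bdist Ω (γ t) ^ (β - 1) := by
  have := intervalIntegral.integral_mono_on (μ := volume) (by linarith : s ≤ s + ℓ)
    (intervalIntegrable_const (c := (bdist Ω (γ s) + ℓ) ^ (β - 1)))
    (h.int' hs (by linarith) hsL) fun t ht => by
      refine Real.rpow_le_rpow_of_nonpos
        (bdist_pos hΩ hf (h.mem t ⟨hs.trans ht.1, ht.2.trans hsL⟩)) ?_ (by linarith)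
      have h1 := bdist_le_add Ω (γ t) (γ s)
      have h2 := h.norm_sub_le hs ht.1 (ht.2.trans hsL)
      linarith [ht.2]
  simpa using this

lemma rpow_mul_le {c b β : ℝ} (hc : 1 ≤ c) (hb : 0 ≤ b) (hβ1 : β ≤ 1) :
    (c * b) ^ β ≤ c * b ^ β := by
  rw [Real.mul_rpow (by linarith) hb]
  refine mul_le_mul_of_nonneg_right ?_ (Real.rpow_nonneg hb _)
  simpa using Real.rpow_le_rpow_of_exponent_le hc hβ1

lemma le_mul_rpow {c b β : ℝ} (hc : 1 ≤ c) (hb : 0 < b) (hβ0 : 0 < β) :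
    b ^ β ≤ c * (b * (c * b) ^ (β - 1)) := by
  have hc0 : 0 < c := by linarith
  rw [Real.mul_rpow hc0.le hb.le]
  have h1 : c⁻¹ ≤ c ^ (β - 1) := by
    rw [← Real.rpow_neg_one]
    exact Real.rpow_le_rpow_of_exponent_le hc (by linarith)
  have h2 : b ^ β = b * b ^ (β - 1) := by
    rw [Real.rpow_sub_one hb.ne']; field_simp
  calc b ^ β = c * (b * (c⁻¹ * b ^ (β - 1))) := by rw [h2]; field_simp
    _ ≤ _ := by gcongr

/-- An arc of Euclidean length at least `δ / 8`, where `δ` is the distance of its initial point to the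
boundary, has subhyperbolic length at least `δ ^ β / 9`. -/
lemma AdmCurve.rpow_bdist_le {Ω : Set (Eu n)} (hΩ : IsOpen Ω) (hf : (frontier Ω).Nonempty)
    {β L : ℝ} (hβ0 : 0 < β) (hβ : β ≤ 1) {γ : ℝ → Eu n} (h : AdmCurve Ω β L γ) {s s' : ℝ}
    (hs : 0 ≤ s) (hs' : s' ≤ L) (hss : bdist Ω (γ s) / 8 ≤ s' - s) :
    bdist Ω (γ s) ^ β ≤ 9 * ∫ t in s..s', bdist Ω (γ t) ^ (β - 1) := by
  have hpos : 0 ≤ bdist Ω (γ s) := Metric.infDist_nonneg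
  have hpos' : 0 < bdist Ω (γ s) := bdist_pos hΩ hf (h.mem s ⟨hs, by linarith⟩)
  set δ := bdist Ω (γ s) with hδ
  have h1 := h.le_integral hΩ hf hβ hs (ℓ := δ / 8) (by positivity) (by linarith)
  have h2 := h.integral_le hs le_rfl (by linarith : s ≤ s + δ / 8) (by linarith) hs'
  have h3 := le_mul_rpow (c := 9 / 8) (by norm_num) hpos' hβ0
  rw [← hδ, show δ + δ / 8 = 9 / 8 * δ by ring] at h1
  nlinarith

/-- Greedy chain along a curve: from each point, pass to the last visit of the cube around it.
`f` is the function along the curve and `Φ t` bounds its oscillation near the parameter `t`. -/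
lemma AdmCurve.chain {Ω : Set (Eu n)} (hΩ : IsOpen Ω) (hf : (frontier Ω).Nonempty)
    {β L : ℝ} (hβ0 : 0 < β) (hβ : β ≤ 1) {γ : ℝ → Eu n} (h : AdmCurve Ω β L γ)
    (f Φ : ℝ → ℝ)
    (hfΦ : ∀ t ∈ Icc 0 L, ∀ t' ∈ Icc 0 L, ‖γ t' - γ t‖ ≤ bdist Ω (γ t) / 8 →
      |f t - f t'| ≤ Φ t) :
    ∃ T : Finset ℝ, (0 : ℝ) ∈ T ∧ (∀ t ∈ T, t ∈ Icc 0 L) ∧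
      (∀ t ∈ T, ∀ t' ∈ T, t < t' → bdist Ω (γ t) / 8 ≤ ‖γ t' - γ t‖) ∧
      (∑ t ∈ T, bdist Ω (γ t) ^ β ≤
        27 * (∫ t in (0:ℝ)..L, bdist Ω (γ t) ^ (β - 1)) + bdist Ω (γ 0) ^ β) ∧
      |f 0 - f L| ≤ ∑ t ∈ T, Φ t := by
  have hγc : ContinuousOn γ (Icc 0 L) := h.lip.continuousOn
  have hδc : ContinuousOn (fun t => bdist Ω (γ t)) (Icc 0 L) :=
    (continuous_bdist Ω).comp_continuousOn hγc
  obtain ⟨m0, hm0, hmin⟩ := isCompact_Icc.exists_isMinOn (nonempty_Icc.2 h.nonneg) hδc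
  set ε := bdist Ω (γ m0) / 8 with hε
  have hεpos : 0 < ε := by
    have := bdist_pos hΩ hf (h.mem m0 hm0)
    positivity
  have hεle : ∀ t ∈ Icc 0 L, ε ≤ bdist Ω (γ t) / 8 := fun t ht => by
    have : bdist Ω (γ m0) ≤ bdist Ω (γ t) := hmin ht
    linarith
  -- induction on the number of steps of parameter length `ε` that remain
  have key : ∀ m : ℕ, ∀ s ∈ Icc 0 L, L - s ≤ m * ε →
      ∃ T : Finset ℝ, s ∈ T ∧ (∀ t ∈ T, t ∈ Icc s L) ∧
      (∀ t ∈ T, ∀ t' ∈ T, t < t' → bdist Ω (γ t) / 8 ≤ ‖γ t' - γ t‖) ∧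
      (∑ t ∈ T, bdist Ω (γ t) ^ β ≤
        27 * (∫ t in s..L, bdist Ω (γ t) ^ (β - 1)) + bdist Ω (γ s) ^ β) ∧
      |f s - f L| ≤ ∑ t ∈ T, Φ t := by
    intro m
    induction m with
    | zero =>
      intro s hs hsm
      have hsL : s = L := by
        have := hs.2
        simp at hsm
        linarith
      subst hsL
      refine ⟨{s}, by simp, by simp, ?_, by simp, ?_⟩
      · intro t ht t' ht' htt
        rw [Finset.mem_singleton] at ht ht'
        subst ht; subst ht'
        exact absurd htt (lt_irrefl _)
      · have := hfΦ s hs s hs (by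
          have : 0 ≤ bdist Ω (γ s) := Metric.infDist_nonneg
          simp only [sub_self, norm_zero]; positivity)
        simpa using this
    | succ m ih =>
      intro s hs hsm
      have hδs : 0 < bdist Ω (γ s) := bdist_pos hΩ hf (h.mem s hs)
      by_cases hend : ‖γ L - γ s‖ ≤ bdist Ω (γ s) / 8
      · refine ⟨{s}, by simp, by simp [hs.2], ?_, ?_, ?_⟩
        · intro t ht t' ht' htt
          rw [Finset.mem_singleton] at ht ht'
          subst ht; subst ht'
          exact absurd htt (lt_irrefl _)
        · have : 0 ≤ ∫ t in s..L, bdist Ω (γ t) ^ (β - 1) :=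
            intervalIntegral.integral_nonneg hs.2
              fun _ _ => Real.rpow_nonneg Metric.infDist_nonneg _
          simp; linarith
        · simpa using hfΦ s hs L ⟨h.nonneg, le_rfl⟩ hend
      · -- the last visit of the cube around `γ s`
        have hsub : Icc s L ⊆ Icc 0 L := Icc_subset_Icc_left hs.1
        have hcl : IsCompact {t ∈ Icc s L | ‖γ t - γ s‖ ≤ bdist Ω (γ s) / 8} := by
          have hcont : ContinuousOn (fun t => ‖γ t - γ s‖) (Icc s L) :=
            ((hγc.mono hsub).sub continuousOn_const).norm
          have := hcont.preimage_isClosed_of_isClosed isClosed_Icc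
            (isClosed_Iic (a := bdist Ω (γ s) / 8))
          exact isCompact_Icc.of_isClosed_subset this (fun t ht => ht.1)
        obtain ⟨s', ⟨hs'I, hs'le⟩, hs'max⟩ := hcl.exists_isGreatest
          ⟨s, ⟨le_rfl, hs.2⟩, by simp only [sub_self, norm_zero]; positivity⟩
        have hs'L : s' < L := lt_of_le_of_ne hs'I.2 (fun e => hend (e ▸ hs'le))
        have hout : ∀ t ∈ Ioc s' L, bdist Ω (γ s) / 8 ≤ ‖γ t - γ s‖ := by
          intro t ht
          by_contra! hcon
          have := hs'max ⟨⟨hs'I.1.trans ht.1.le, ht.2⟩, hcon.le⟩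
          exact absurd ht.1 (not_lt.2 this)
        have hbd : bdist Ω (γ s) / 8 ≤ ‖γ s' - γ s‖ := by
          have hc : ContinuousWithinAt (fun t => ‖γ t - γ s‖) (Ioc s' L) s' :=
            (((hγc s' (hsub hs'I)).mono
              (Ioc_subset_Icc_self.trans (Icc_subset_Icc_left (hs.1.trans hs'I.1)))).sub
              continuousWithinAt_const).norm
          have hne : (nhdsWithin s' (Ioc s' L)).NeBot := by
            rw [nhdsWithin_Ioc_eq_nhdsGT hs'L]; infer_instance
          exact ge_of_tendsto hc (eventually_mem_nhdsWithin.mono fun t ht => hout t ht)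
        have hgap : bdist Ω (γ s) / 8 ≤ s' - s :=
          hbd.trans (h.norm_sub_le hs.1 hs'I.1 hs'I.2)
        have hs'0 : s' ∈ Icc 0 L := hsub hs'I
        obtain ⟨T, hsT, hTI, hTsep, hTsum, hTf⟩ := ih s' hs'0 (by
          have := hεle s hs
          push_cast at hsm
          linarith)
        have hsnot : s ∉ T := fun hc => by
          have := (hTI s hc).1
          linarith
        refine ⟨insert s T, by simp, ?_, ?_, ?_, ?_⟩
        · intro t ht
          rcases Finset.mem_insert.1 ht with rfl | ht
          · exact ⟨le_rfl, hs.2⟩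
          · exact ⟨hs'I.1.trans (hTI t ht).1, (hTI t ht).2⟩
        · intro t ht t' ht' htt
          rcases Finset.mem_insert.1 ht with rfl | htT
          · rcases Finset.mem_insert.1 ht' with rfl | ht'
            · exact absurd htt (lt_irrefl _)
            · rcases (hTI t' ht').1.eq_or_lt with e | e
              · rw [← e]; exact hbd
              · exact hout t' ⟨e, (hTI t' ht').2⟩
          · rcases Finset.mem_insert.1 ht' with rfl | ht'
            · have := (hTI t htT).1
              linarith
            · exact hTsep t htT t' ht' htt
        · rw [Finset.sum_insert hsnot]
          have e1 := h.rpow_bdist_le hΩ hf hβ0 hβ hs.1 hs'I.2 hgap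
          have e2 : bdist Ω (γ s') ^ β ≤ 2 * bdist Ω (γ s) ^ β := by
            refine le_trans (Real.rpow_le_rpow Metric.infDist_nonneg ?_ hβ0.le)
              (rpow_mul_le (by norm_num) hδs.le hβ)
            have := bdist_le_add Ω (γ s') (γ s)
            linarith
          have e3 := intervalIntegral.integral_add_adjacent_intervals
            (h.int' hs.1 hs'I.1 hs'I.2) (h.int' hs'0.1 hs'I.2 le_rfl)
          have e4 : 0 ≤ bdist Ω (γ s) ^ β := Real.rpow_nonneg hδs.le _
          linarith
        · rw [Finset.sum_insert hsnot]
          have e1 := hfΦ s hs s' hs'0 hs'le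
          have := abs_sub_le (f s) (f s') (f L)
          linarith
  obtain ⟨m, hm⟩ := exists_nat_ge (L / ε)
  refine key m 0 ⟨le_rfl, h.nonneg⟩ ?_
  rw [div_le_iff₀ hεpos] at hm
  linarith

/-- Bounded overlap: cubes of size proportional to the distance to the boundary, each of whose
centers avoids the earlier cubes, meet at most `5 ^ n` at a time. -/
lemma overlap {Ω : Set (Eu n)} {c : ℝ → Eu n} {T : Finset ℝ} {z : Eu n}
    (hpos : ∀ t ∈ T, 0 < bdist Ω (c t))
    (hsep : ∀ t ∈ T, ∀ t' ∈ T, t < t' → bdist Ω (c t) / 8 ≤ ‖c t' - c t‖)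
    (hz : ∀ t ∈ T, ‖z - c t‖ ≤ bdist Ω (c t) / 8) : T.card ≤ 5 ^ n := by
  rcases T.eq_empty_or_nonempty with rfl | ⟨t0, ht0⟩
  · simp
  set d := bdist Ω z with hd
  have hcmp : ∀ t ∈ T, 8 / 9 * d ≤ bdist Ω (c t) ∧ bdist Ω (c t) ≤ 8 / 7 * d := by
    intro t ht
    have h1 := bdist_le_add Ω z (c t)
    have h2 := bdist_le_add Ω (c t) z
    rw [norm_sub_rev] at h2
    have h3 := hz t ht
    constructor <;> linarith
  have hd0 : 0 < d := by
    have := hpos t0 ht0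
    have := (hcmp t0 ht0).2
    linarith
  -- put the centers into a grid of mesh `d / 9`; two of them in the same cell would be too close
  let φ : ℝ → (Fin n → ℤ) := fun t k => ⌊(c t k - z k) / (d / 9)⌋
  have hmaps : ∀ t ∈ T, φ t ∈ Fintype.piFinset fun _ : Fin n => Finset.Icc (-2 : ℤ) 2 := by
    intro t ht
    rw [Fintype.mem_piFinset]
    intro k
    have h1 : |c t k - z k| ≤ d / 7 := by
      have h2 : ‖(z - c t) k‖ ≤ ‖z - c t‖ := norm_le_pi_norm _ k
      rw [Pi.sub_apply, Real.norm_eq_abs, abs_sub_comm] at h2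
      have := hz t ht
      have := (hcmp t ht).2
      linarith
    rw [abs_le] at h1
    rw [Finset.mem_Icc]
    constructor
    · rw [Int.le_floor, le_div_iff₀ (by positivity)]
      push_cast
      linarith
    · rw [← Int.lt_add_one_iff, Int.floor_lt, div_lt_iff₀ (by positivity)]
      push_cast
      linarith
  have hlt : ∀ t ∈ T, ∀ t' ∈ T, t < t' → φ t ≠ φ t' := by
    intro t ht t' ht' htt he
    have h1 := hsep t ht t' ht' htt
    have h2 := (hcmp t ht).1
    have h3 : ‖c t' - c t‖ < d / 9 := by
      rw [pi_norm_lt_iff (by positivity)]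
      intro k
      have h4 := Int.abs_sub_lt_one_of_floor_eq_floor (congr_fun he k).symm
      rw [← _root_.sub_div, abs_div, abs_of_pos (by positivity : 0 < d / 9),
        div_lt_one (by positivity)] at h4
      rw [Pi.sub_apply, Real.norm_eq_abs]
      calc |c t' k - c t k| = |c t' k - z k - (c t k - z k)| := by ring_nf
        _ < _ := h4
    linarith
  have hinj : Set.InjOn φ (T : Set ℝ) := by
    intro t ht t' ht' he
    rcases lt_trichotomy t t' with hh | hh | hh
    · exact absurd he (hlt t ht t' ht' hh)
    · exact hh
    · exact absurd he.symm (hlt t' ht' t ht hh)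
  have := Finset.card_le_card_of_injOn φ hmaps hinj
  simpa [Fintype.card_piFinset] using this

/-! ### Integrability and summation over the chain -/

/-- On bounded subsets of `Ω` the gradient is `q`-integrable, since `t ^ q ≤ 1 + t ^ p`. -/
lemma integrableOn_rpow_of_bounded {Ω S : Set (Eu n)} {g : Eu n → Eu n} {p q : ℝ}
    (hq : 0 < q) (hqp : q ≤ p) (hgl : LocallyIntegrableOn g Ω volume)
    (hgp : IntegrableOn (fun z => ‖g z‖ ^ p) Ω volume) (hS : S ⊆ Ω) {x : Eu n} {R : ℝ}
    (hSR : S ⊆ Metric.closedBall x R) : IntegrableOn (fun z => ‖g z‖ ^ q) S volume := by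
  have hfin : volume S ≠ ∞ := ((measure_mono hSR).trans_lt measure_closedBall_lt_top).ne
  have h1 : IntegrableOn (fun z => 1 + ‖g z‖ ^ p) S volume :=
    (integrableOn_const hfin).add (hgp.mono_set hS)
  have hm : AEStronglyMeasurable g (volume.restrict S) :=
    hgl.aestronglyMeasurable.mono_measure (Measure.restrict_mono hS le_rfl)
  refine Integrable.mono' h1 (hm.norm.aemeasurable.pow_const q).aestronglyMeasurable ?_
  refine Eventually.of_forall fun z => ?_
  rw [Real.norm_of_nonneg (by positivity)]
  rcases le_total ‖g z‖ 1 with h | h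
  · have := Real.rpow_le_one (norm_nonneg _) h hq.le
    have : 0 ≤ ‖g z‖ ^ p := by positivity
    linarith
  · have := Real.rpow_le_rpow_of_exponent_le h hqp
    linarith

/-- The closed `d̃_{β,Ω}`-ball in `Ω` with center `x` and radius `D`. -/
def bigB (Ω : Set (Eu n)) (β D : ℝ) (x : Eu n) : Set (Eu n) :=
  {z ∈ Ω | dTil Ω β x z ≤ D}

lemma bigB_subset_closedBall {Ω : Set (Eu n)} {β D : ℝ} (hβ : 0 < β) (x : Eu n) :
    bigB Ω β D x ⊆ Metric.closedBall x (D ^ (1 / β)) := by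
  rintro z ⟨-, hz⟩
  have h1 := dSub_nonneg Ω β x z
  unfold dTil at hz
  rw [mem_closedBall_iff_norm, norm_sub_rev]
  have h2 : ‖x - z‖ = (‖x - z‖ ^ β) ^ (1 / β) := by
    rw [← Real.rpow_mul (norm_nonneg _), mul_one_div_cancel hβ.ne', Real.rpow_one]
  rw [h2]
  exact Real.rpow_le_rpow (by positivity) (by linarith) (by positivity)

/-- A cube on which the weight `dist(·, ∂Ω) ^ (β - 1)` is at most `r ^ (β - 1)` lies in the
`d̃`-ball of radius `2 r ^ β`, as one sees along segments from the center. -/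
lemma near_subset {Ω : Set (Eu n)} {β : ℝ} (hβ : 0 < β) {x : Eu n} {r : ℝ} (hr : 0 < r)
    (h : ∀ p ∈ Metric.closedBall x r, p ∈ Ω ∧ bdist Ω p ^ (β - 1) ≤ r ^ (β - 1)) :
    Metric.closedBall x r ⊆ bigB Ω β (2 * r ^ β) x := by
  intro z hz
  refine ⟨(h z hz).1, ?_⟩
  have hsub : segment ℝ x z ⊆ Metric.closedBall x r :=
    (convex_closedBall x r).segment_subset (Metric.mem_closedBall_self hr.le) hz
  obtain ⟨d, hd, hd'⟩ := subLenSet_segment fun p hp => h p (hsub hp)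
  have hz' : ‖z - x‖ ≤ r := by rwa [← mem_closedBall_iff_norm]
  have h1 := dSub_le hd
  have h2 : r ^ (β - 1) * ‖z - x‖ ≤ r ^ β := by
    calc _ ≤ r ^ (β - 1) * r := by gcongr
      _ = r ^ β := by rw [Real.rpow_sub_one hr.ne']; field_simp
  have h3 : ‖x - z‖ ^ β ≤ r ^ β := by
    rw [norm_sub_rev]
    exact Real.rpow_le_rpow (norm_nonneg _) hz' hβ.le
  unfold dTil
  linarith

/-- The cubes of the chain lie in a fixed multiple of the `dTil`-ball. -/
lemma AdmCurve.cube_subset {Ω : Set (Eu n)} (hΩ : IsOpen Ω) (hf : (frontier Ω).Nonempty)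
    {β L : ℝ} (hβ0 : 0 < β) (hβ : β ≤ 1) {γ : ℝ → Eu n} (h : AdmCurve Ω β L γ) {D : ℝ}
    (hD : ∫ t in (0:ℝ)..L, bdist Ω (γ t) ^ (β - 1) ≤ D)
    {t : ℝ} (ht : t ∈ Icc 0 L) (hδ : bdist Ω (γ t) ^ β ≤ 35 * D)
    (hfar : t ≠ 0 → bdist Ω (γ 0) / 8 ≤ ‖γ t - γ 0‖) :
    Metric.closedBall (γ t) (bdist Ω (γ t) / 8) ⊆ bigB Ω β (80 * D) (γ 0) := by
  intro z hz
  have hD0 : 0 ≤ D := le_trans (intervalIntegral.integral_nonneg h.nonneg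
    fun _ _ => Real.rpow_nonneg Metric.infDist_nonneg _) hD
  have hγt := h.mem t ht
  have hδ0 := bdist_pos hΩ hf hγt
  set δ := bdist Ω (γ t) with hδdef
  have hball : Metric.closedBall (γ t) (δ / 8) ⊆ Ω :=
    closedBall_subset_of_lt hΩ hγt (by positivity) (by linarith)
  refine ⟨hball hz, ?_⟩
  have hz' : ‖z - γ t‖ ≤ δ / 8 := by rwa [← mem_closedBall_iff_norm]
  have hsub : segment ℝ (γ t) z ⊆ Metric.closedBall (γ t) (δ / 8) :=
    (convex_closedBall _ _).segment_subset (Metric.mem_closedBall_self (by positivity)) hz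
  -- the distance to the boundary is at least `δ / 8` on the cube
  obtain ⟨d, hd, hd'⟩ := subLenSet_segment (Ω := Ω) (α := β) (x := γ t) (z := z)
    (W := (δ / 8) ^ (β - 1)) fun p hp => by
      have hp' := hsub hp
      refine ⟨hball hp', Real.rpow_le_rpow_of_nonpos (by positivity) ?_ (by linarith)⟩
      have h1 := bdist_le_add Ω (γ t) p
      rw [norm_sub_rev] at h1
      have h2 : ‖p - γ t‖ ≤ δ / 8 := by rwa [← mem_closedBall_iff_norm]
      linarith
  have hle8 : (δ / 8) ^ β ≤ δ ^ β :=
    Real.rpow_le_rpow (by positivity) (by linarith) hβ0.le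
  have hdle : d ≤ δ ^ β := by
    refine hd'.trans (le_trans ?_ hle8)
    calc _ ≤ (δ / 8) ^ (β - 1) * (δ / 8) := by gcongr
      _ = (δ / 8) ^ β := by rw [Real.rpow_sub_one (by positivity)]; field_simp
  have h1 := dSub_le (subLenSet_concat (h.mem_subLenSet ht.1 ht.2) hd)
  have h2 := h.integral_le le_rfl le_rfl ht.1 ht.2 le_rfl
  have h3 : ‖γ 0 - z‖ ^ β ≤ ‖γ t - γ 0‖ ^ β + δ ^ β := by
    refine le_trans (Real.rpow_le_rpow (norm_nonneg _) ?_ hβ0.le)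
      ((Real.rpow_add_le_add_rpow (norm_nonneg _) (by positivity : 0 ≤ δ / 8) hβ0.le hβ).trans
        (by gcongr))
    rw [norm_sub_rev]
    calc ‖z - γ 0‖ = ‖(γ t - γ 0) + (z - γ t)‖ := by congr 1; abel
      _ ≤ _ := (norm_add_le _ _).trans (by linarith)
  have h4 : ‖γ t - γ 0‖ ^ β ≤ 9 * D := by
    by_cases ht0 : t = 0
    · subst ht0
      simp [Real.zero_rpow hβ0.ne', hD0]
    · have g1 := hfar ht0
      have g2 := h.norm_sub_le le_rfl ht.1 ht.2
      set ℓ := ‖γ t - γ 0‖ with hℓ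
      have h00 := bdist_pos hΩ hf (h.mem 0 ⟨le_rfl, h.nonneg⟩)
      have hℓ0 : 0 < ℓ := by linarith
      have g3 := h.le_integral hΩ hf hβ le_rfl hℓ0.le (by linarith [ht.2])
      have g4 := h.integral_le (b := L) le_rfl le_rfl (by linarith : (0:ℝ) ≤ 0 + ℓ)
        (by linarith [ht.2]) le_rfl
      have g5 : (9 * ℓ) ^ (β - 1) ≤ (bdist Ω (γ 0) + ℓ) ^ (β - 1) :=
        Real.rpow_le_rpow_of_nonpos (by positivity) (by linarith) (by linarith)
      have g6 := le_mul_rpow (c := 9) (by norm_num) hℓ0 hβ0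
      have g7 := mul_le_mul_of_nonneg_left g5 hℓ0.le
      linarith
  unfold dTil
  linarith

/-- Hölder's inequality for the sum of the Morrey bounds over the chain; `β` is the exponent for which
`(δ ^ ν) ^ (q / (q - 1)) = δ ^ β`. -/
lemma sum_holder {T : Finset ℝ} {δ I : ℝ → ℝ} {q ν β M D V : ℝ} (hq : 1 < q)
    (hβ : ν * (q / (q - 1)) = β) (hM : 0 ≤ M) (hδ : ∀ t ∈ T, 0 ≤ δ t) (hI : ∀ t ∈ T, 0 ≤ I t)
    (hD : ∑ t ∈ T, δ t ^ β ≤ D) (hV : ∑ t ∈ T, I t ≤ V) :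
    ∑ t ∈ T, M * δ t ^ ν * I t ^ (1 / q) ≤ M * D ^ (1 - 1 / q) * V ^ (1 / q) := by
  have hq0 : 0 < q := by linarith
  have hc : (q / (q - 1)).HolderConjugate q := (Real.HolderConjugate.conjExponent hq).symm
  have h1 := Real.inner_le_Lp_mul_Lq_of_nonneg T hc (f := fun t => δ t ^ ν)
    (g := fun t => I t ^ (1 / q)) (fun t ht => Real.rpow_nonneg (hδ t ht) _)
    (fun t ht => Real.rpow_nonneg (hI t ht) _)
  have h2 : ∑ t ∈ T, (δ t ^ ν) ^ (q / (q - 1)) = ∑ t ∈ T, δ t ^ β :=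
    Finset.sum_congr rfl fun t ht => by rw [← Real.rpow_mul (hδ t ht), hβ]
  have h3 : ∑ t ∈ T, (I t ^ (1 / q)) ^ q = ∑ t ∈ T, I t :=
    Finset.sum_congr rfl fun t ht => by
      rw [← Real.rpow_mul (hI t ht), one_div_mul_cancel hq0.ne', Real.rpow_one]
  have h4 : 1 / (q / (q - 1)) = 1 - 1 / q := by field_simp
  rw [h2, h3, h4] at h1
  have h5 : 0 ≤ 1 - 1 / q := by
    rw [sub_nonneg, div_le_one hq0]; exact hq.le
  have hs1 : 0 ≤ ∑ t ∈ T, δ t ^ β := Finset.sum_nonneg fun t ht => Real.rpow_nonneg (hδ t ht) _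
  have hs2 : 0 ≤ ∑ t ∈ T, I t := Finset.sum_nonneg hI
  simp_rw [mul_assoc]
  rw [← Finset.mul_sum]
  refine mul_le_mul_of_nonneg_left (h1.trans ?_) hM
  gcongr
  exact Real.rpow_nonneg (hs1.trans hD) _

/-- Sets of overlap at most `N` inside `B` have total integral at most `N` times that of `B`. -/
lemma sum_integral_le {T : Finset ℝ} {Q : ℝ → Set (Eu n)} {B : Set (Eu n)} {k : Eu n → ℝ}
    (hk : ∀ z, 0 ≤ k z) (hB : IntegrableOn k B volume) (hQm : ∀ t ∈ T, MeasurableSet (Q t))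
    (hQB : ∀ t ∈ T, Q t ⊆ B) {N : ℕ}
    (hN : ∀ z, ∀ T' ⊆ T, (∀ t ∈ T', z ∈ Q t) → T'.card ≤ N) :
    ∑ t ∈ T, ∫ z in Q t, k z ≤ N * ∫ z in B, k z := by
  classical
  set U := ⋃ t ∈ T, Q t with hU
  have hUm : MeasurableSet U := T.measurableSet_biUnion hQm
  have hUB : U ⊆ B := iUnion₂_subset hQB
  have hkU : IntegrableOn k U volume := hB.mono_set hUB
  have hQU : ∀ t ∈ T, Q t ⊆ U := fun t ht => subset_biUnion_of_mem (u := Q) ht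
  have e1 : ∀ t ∈ T, ∫ z in Q t, k z = ∫ z in U, (Q t).indicator k z := by
    intro t ht
    rw [setIntegral_indicator (hQm t ht), inter_eq_self_of_subset_right (hQU t ht)]
  rw [Finset.sum_congr rfl e1, ← integral_finsetSum]
  · calc ∫ z in U, ∑ t ∈ T, (Q t).indicator k z ≤ ∫ z in U, N * k z := by
          refine integral_mono (integrable_finsetSum _ fun t ht => hkU.indicator (hQm t ht))
            (hkU.const_mul _) fun z => ?_
          have : ∑ t ∈ T, (Q t).indicator k z = (T.filter fun t => z ∈ Q t).card * k z := by
            rw [← nsmul_eq_mul, ← Finset.sum_const, Finset.sum_filter]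
            exact Finset.sum_congr rfl fun t _ => by rw [indicator_apply]
          simp only [this]
          refine mul_le_mul_of_nonneg_right ?_ (hk z)
          exact_mod_cast hN z _ (Finset.filter_subset _ _) fun t ht =>
            (Finset.mem_filter.1 ht).2
      _ = N * ∫ z in U, k z := integral_const_mul _ _
      _ ≤ _ := by
          refine mul_le_mul_of_nonneg_left ?_ (Nat.cast_nonneg _)
          exact setIntegral_mono_set hB (Eventually.of_forall hk) (LE.le.eventuallyLE hUB)
  · exact fun t ht => hkU.indicator (hQm t ht)

/-! ### The near and the far case -/

/-- The Morrey inequality on all cubes contained in `Ω`, with constant `M`. -/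
def MorreyOn (Ω : Set (Eu n)) (F : Eu n → ℝ) (g : Eu n → Eu n) (q M : ℝ) : Prop :=
  ∀ a r, 0 < r → Metric.closedBall a r ⊆ Ω →
    IntegrableOn (fun z => ‖g z‖ ^ q) (Metric.closedBall a r) volume →
    ∀ u ∈ Metric.closedBall a r, |F a - F u| ≤ M * r ^ (1 - n / q) *
      (∫ z in Metric.closedBall a r, ‖g z‖ ^ q) ^ (1 / q)

/-- Points whose distance is small compared with the distance to the boundary: a single cube
suffices. -/
lemma near_case {Ω : Set (Eu n)} {F : Eu n → ℝ} {g : Eu n → Eu n} {q M β : ℝ}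
    (hq : 1 < q) (hM : 0 < M) (hmor : MorreyOn Ω F g q M) (hβ0 : 0 < β)
    (hβq : β * (1 - 1 / q) = 1 - n / q) {x y : Eu n} (hxy : x ≠ y)
    (hint : IntegrableOn (fun z => ‖g z‖ ^ q) (bigB Ω β (80 * dTil Ω β x y) x) volume)
    (h : ∀ p ∈ Metric.closedBall x ‖x - y‖,
      p ∈ Ω ∧ bdist Ω p ^ (β - 1) ≤ ‖x - y‖ ^ (β - 1)) :
    |F x - F y| ≤ M * dTil Ω β x y ^ (1 - 1 / q) *
      (∫ z in bigB Ω β (80 * dTil Ω β x y) x, ‖g z‖ ^ q) ^ (1 / q) := by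
  have hr : 0 < ‖x - y‖ := norm_pos_iff.2 (sub_ne_zero.2 hxy)
  set r := ‖x - y‖ with hrdef
  have hq0 : 0 < q := by linarith
  have hrD : r ^ β ≤ dTil Ω β x y := by
    have := dSub_nonneg Ω β x y
    unfold dTil
    linarith
  set D := dTil Ω β x y with hD
  have hrβ : 0 ≤ r ^ β := Real.rpow_nonneg hr.le _
  have hsub : Metric.closedBall x r ⊆ bigB Ω β (80 * D) x := by
    refine (near_subset hβ0 hr h).trans fun z hz => ⟨hz.1, hz.2.trans ?_⟩
    linarith
  have h1 := hmor x r hr (fun p hp => (h p hp).1) (hint.mono_set hsub) y (by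
    rw [mem_closedBall_iff_norm, norm_sub_rev])
  refine h1.trans ?_
  have h0 : 0 ≤ 1 - 1 / q := by
    rw [sub_nonneg, div_le_one hq0]; exact hq.le
  have h2 : r ^ (1 - n / q) ≤ D ^ (1 - 1 / q) := by
    rw [← hβq, Real.rpow_mul hr.le]
    exact Real.rpow_le_rpow hrβ hrD h0
  have h3 : ∫ z in Metric.closedBall x r, ‖g z‖ ^ q ≤ ∫ z in bigB Ω β (80 * D) x, ‖g z‖ ^ q :=
    setIntegral_mono_set hint (Eventually.of_forall fun z => Real.rpow_nonneg (norm_nonneg _) _)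
      (LE.le.eventuallyLE hsub)
  have h4 : 0 ≤ ∫ z in Metric.closedBall x r, ‖g z‖ ^ q :=
    integral_nonneg fun z => Real.rpow_nonneg (norm_nonneg _) _
  have h5 : 0 ≤ D ^ (1 - 1 / q) := Real.rpow_nonneg (hrβ.trans hrD) _
  exact mul_le_mul (mul_le_mul_of_nonneg_left h2 hM.le)
    (Real.rpow_le_rpow h4 h3 (by positivity)) (Real.rpow_nonneg h4 _) (by positivity)

/-- Points whose distance is large compared with the distance to the boundary: sum Morrey's
inequality over the chain along a curve of almost minimal subhyperbolic length. -/
lemma far_case {Ω : Set (Eu n)} (hΩ : IsOpen Ω) (hc : IsConnected Ω)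
    (hf : (frontier Ω).Nonempty) {F : Eu n → ℝ} {g : Eu n → Eu n} {q M β : ℝ}
    (hq : 1 < q) (hM : 0 < M) (hnq : (n : ℝ) < q) (hmor : MorreyOn Ω F g q M) (hβ0 : 0 < β)
    (hβ1 : β ≤ 1) (hβq : (1 - n / q) * (q / (q - 1)) = β) {x y : Eu n} (hx : x ∈ Ω)
    (hy : y ∈ Ω) (hxy : bdist Ω x / 8 < ‖x - y‖)
    (hloc : ∀ a r, Metric.closedBall a r ⊆ Ω →
      IntegrableOn (fun z => ‖g z‖ ^ q) (Metric.closedBall a r) volume)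
    (hint : IntegrableOn (fun z => ‖g z‖ ^ q) (bigB Ω β (80 * dTil Ω β x y) x) volume) :
    |F x - F y| ≤ M * (35 * 5 ^ n) * dTil Ω β x y ^ (1 - 1 / q) *
      (∫ z in bigB Ω β (80 * dTil Ω β x y) x, ‖g z‖ ^ q) ^ (1 / q) := by
  have hq0 : 0 < q := by linarith
  have hδx := bdist_pos hΩ hf hx
  have hr : 0 < ‖x - y‖ := by linarith
  have hrβ : 0 < ‖x - y‖ ^ β := Real.rpow_pos_of_pos hr _
  have hds := dSub_nonneg Ω β x y
  set D := dTil Ω β x y with hD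
  have hDeq : D = dSub Ω β x y + ‖x - y‖ ^ β := rfl
  obtain ⟨d, ⟨L, γ, hL, hlip, rfl, rfl, hmem, hi, rfl⟩, hlt⟩ :=
    exists_lt_of_csInf_lt (subLenSet_nonempty hΩ hc hβ1 hx hy)
      (show sInf (subLenSet Ω β x y) < D by
        have : sInf (subLenSet Ω β x y) = dSub Ω β x y := rfl
        linarith)
  have h : AdmCurve Ω β L γ := ⟨hL, hlip, hmem, hi⟩
  set k : Eu n → ℝ := fun z => ‖g z‖ ^ q with hk
  have hk0 : ∀ z, 0 ≤ k z := fun z => Real.rpow_nonneg (norm_nonneg _) _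
  set B := bigB Ω β (80 * D) (γ 0) with hB
  let Q : ℝ → Set (Eu n) := fun t => Metric.closedBall (γ t) (bdist Ω (γ t) / 8)
  set ν : ℝ := 1 - n / q with hν
  have hν0 : 0 ≤ ν := by
    rw [hν, sub_nonneg, div_le_one hq0]; exact hnq.le
  have hQΩ : ∀ t ∈ Icc 0 L, Q t ⊆ Ω := fun t ht => by
    have := bdist_pos hΩ hf (hmem t ht)
    exact closedBall_subset_of_lt hΩ (hmem t ht) (by positivity) (by linarith)
  have hI0 : ∀ t, 0 ≤ ∫ z in Q t, k z := fun t => integral_nonneg hk0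
  obtain ⟨T, hT0, hTI, hTsep, hTsum, hTf⟩ := h.chain hΩ hf hβ0 hβ1 (fun t => F (γ t))
    (fun t => M * bdist Ω (γ t) ^ ν * (∫ z in Q t, k z) ^ (1 / q)) (by
      intro t ht t' ht' htt
      have hp := bdist_pos hΩ hf (hmem t ht)
      refine (hmor (γ t) (bdist Ω (γ t) / 8) (by positivity) (hQΩ t ht) (hloc _ _ (hQΩ t ht))
        (γ t') (by rwa [mem_closedBall_iff_norm])).trans ?_
      refine mul_le_mul_of_nonneg_right (mul_le_mul_of_nonneg_left ?_ hM.le)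
        (Real.rpow_nonneg (hI0 t) _)
      exact Real.rpow_le_rpow (by positivity) (by linarith) hν0)
  have hpos : ∀ t ∈ T, 0 < bdist Ω (γ t) := fun t ht => bdist_pos hΩ hf (hmem t (hTI t ht))
  have hfirst : bdist Ω (γ 0) ^ β ≤ 8 * ‖γ 0 - γ L‖ ^ β :=
    (Real.rpow_le_rpow hδx.le (by linarith) hβ0.le).trans
      (rpow_mul_le (by norm_num) hr.le hβ1)
  -- `27 D` from the length of the curve and `8 D` from the first cube
  have hsum : ∑ t ∈ T, bdist Ω (γ t) ^ β ≤ 35 * D := by linarith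
  have hQB : ∀ t ∈ T, Q t ⊆ B := by
    intro t ht
    refine h.cube_subset hΩ hf hβ0 hβ1 hlt.le (hTI t ht) ?_ ?_
    · exact (Finset.single_le_sum (f := fun t => bdist Ω (γ t) ^ β)
        (fun s hs => Real.rpow_nonneg (hpos s hs).le _) ht).trans hsum
    · intro ht0
      exact hTsep 0 hT0 t ht (lt_of_le_of_ne (hTI t ht).1 (Ne.symm ht0))
  have hV := sum_integral_le (T := T) (Q := Q) (N := 5 ^ n) hk0 hint
    (fun t _ => Metric.isClosed_closedBall.measurableSet) hQB (by
      intro z T' hT' hz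
      refine overlap (c := γ) (fun t ht => hpos t (hT' ht))
        (fun t ht t' ht' => hTsep t (hT' ht) t' (hT' ht')) (z := z) fun t ht => ?_
      rw [← mem_closedBall_iff_norm]
      exact hz t ht)
  have hH := sum_holder hq hβq hM.le (fun t ht => (hpos t ht).le) (fun t _ => hI0 t) hsum hV
  refine (hTf.trans hH).trans ?_
  have hD0 : 0 < D := by linarith
  have hV0 : 0 ≤ ∫ z in B, k z := integral_nonneg hk0
  have h1 : (35 * D) ^ (1 - 1 / q) ≤ 35 * D ^ (1 - 1 / q) :=
    rpow_mul_le (by norm_num) hD0.le (by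
      have : 0 ≤ 1 / q := by positivity
      linarith)
  have h2 : (((5 ^ n : ℕ) : ℝ) * ∫ z in B, k z) ^ (1 / q) ≤
      ((5 ^ n : ℕ) : ℝ) * (∫ z in B, k z) ^ (1 / q) :=
    rpow_mul_le (by exact_mod_cast Nat.one_le_pow _ _ (by norm_num)) hV0 (by
      rw [div_le_one hq0]; exact hq.le)
  have h3 : 0 ≤ D ^ (1 - 1 / q) := Real.rpow_nonneg hD0.le _
  calc _ ≤ M * (35 * D ^ (1 - 1 / q)) * (((5 ^ n : ℕ) : ℝ) * (∫ z in B, k z) ^ (1 / q)) :=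
        mul_le_mul (mul_le_mul_of_nonneg_left h1 hM.le) h2
          (Real.rpow_nonneg (mul_nonneg (Nat.cast_nonneg _) hV0) _) (by positivity)
    _ = _ := by push_cast; ring

/-- Proposition 3.3.  Let `Ω ⊆ ℝⁿ` be a domain, `n < q ≤ p < ∞`,
`β = (q−n)/(q−1)`, and let `F ∈ L¹_p(Ω)` be continuous.  There exist constants
`λ = λ(n,q) > 0` and `C = C(n,q) > 0` such that for every `x, y ∈ Ω`,
`|F(x) − F(y)| ≤ C·d̃_{β,Ω}(x,y)^{1−1/q}·(∫_B ‖∇F‖^q)^{1/q}`, where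
`B = {z ∈ Ω : d̃_{β,Ω}(x,z) ≤ λ·d̃_{β,Ω}(x,y)}`. -/
theorem statement12 (n : ℕ) (hn : 0 < n) (q : ℝ) (hq : (n:ℝ) < q) :
    ∃ lam C : ℝ, 0 < lam ∧ 0 < C ∧ ∀ p : ℝ, q ≤ p →
      ∀ (Ω : Set (Eu n)), IsOpen Ω → IsConnected Ω →
        ∀ F g, ContL1pRep Ω p F g →
          ∀ x ∈ Ω, ∀ y ∈ Ω,
            |F x - F y| ≤ C * dTil Ω ((q - n)/(q - 1)) x y ^ (1 - 1/q) *
              (∫ z in {z ∈ Ω | dTil Ω ((q - n)/(q - 1)) x z ≤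
                  lam * dTil Ω ((q - n)/(q - 1)) x y}, ‖g z‖ ^ q) ^ (1/q) := by
  have hn1 : (1 : ℝ) ≤ n := by exact_mod_cast hn
  have hq1 : 1 < q := lt_of_le_of_lt hn1 hq
  have hq0 : 0 < q := by linarith
  have hq1' : 0 < q - 1 := by linarith
  obtain ⟨M, hM, hmorrey⟩ := morrey n hn q hq
  refine ⟨80, M * (35 * 5 ^ n), by norm_num, by positivity, ?_⟩
  intro p hqp Ω hΩ hc F g ⟨hFc, hFg, hgp⟩ x hx y hy
  set β := (q - n) / (q - 1) with hβ
  have hβ0 : 0 < β := div_pos (by linarith) hq1'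
  have hβ1 : β ≤ 1 := by
    rw [hβ, div_le_one hq1']
    linarith
  have hβq : β * (1 - 1 / q) = 1 - n / q := by
    rw [hβ]; field_simp
  have hβq' : (1 - n / q) * (q / (q - 1)) = β := by
    rw [hβ]; field_simp
  have hmor : MorreyOn Ω F g q M := hmorrey Ω hΩ F g hFc hFg
  have hint : ∀ D, IntegrableOn (fun z => ‖g z‖ ^ q) (bigB Ω β D x) volume := fun D =>
    integrableOn_rpow_of_bounded hq0 hqp hFg.2.1 hgp (fun z hz => hz.1)
      (bigB_subset_closedBall hβ0 x)
  have hloc : ∀ a r, Metric.closedBall a r ⊆ Ω →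
      IntegrableOn (fun z => ‖g z‖ ^ q) (Metric.closedBall a r) volume := fun a r h =>
    integrableOn_rpow_of_bounded hq0 hqp hFg.2.1 hgp h le_rfl
  change _ ≤ _ * (∫ z in bigB Ω β (80 * dTil Ω β x y) x, ‖g z‖ ^ q) ^ (1 / q)
  have hV0 : 0 ≤ ∫ z in bigB Ω β (80 * dTil Ω β x y) x, ‖g z‖ ^ q :=
    integral_nonneg fun z => Real.rpow_nonneg (norm_nonneg _) _
  have hD0 : 0 ≤ dTil Ω β x y := add_nonneg (dSub_nonneg _ _ _ _) (by positivity)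
  rcases eq_or_ne x y with rfl | hxy
  · rw [sub_self, abs_zero]
    positivity
  have hr : 0 < ‖x - y‖ := norm_pos_iff.2 (sub_ne_zero.2 hxy)
  have hconst : M ≤ M * (35 * 5 ^ n) := by
    have : (1 : ℝ) ≤ 5 ^ n := one_le_pow₀ (by norm_num)
    nlinarith
  have hfin : ∀ A : ℝ, A ≤ M * dTil Ω β x y ^ (1 - 1 / q) *
      (∫ z in bigB Ω β (80 * dTil Ω β x y) x, ‖g z‖ ^ q) ^ (1 / q) →
      A ≤ M * (35 * 5 ^ n) * dTil Ω β x y ^ (1 - 1 / q) *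
      (∫ z in bigB Ω β (80 * dTil Ω β x y) x, ‖g z‖ ^ q) ^ (1 / q) := fun A hA =>
    hA.trans (mul_le_mul_of_nonneg_right
      (mul_le_mul_of_nonneg_right hconst (Real.rpow_nonneg hD0 _)) (Real.rpow_nonneg hV0 _))
  by_cases hf : (frontier Ω).Nonempty
  · rcases le_or_gt ‖x - y‖ (bdist Ω x / 8) with hle | hgt
    · refine hfin _ (near_case hq1 hM hmor hβ0 hβq hxy (hint _) fun p hp => ?_)
      have hδ := bdist_pos hΩ hf hx
      refine ⟨closedBall_subset_of_lt hΩ hx hr.le (by linarith) hp,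
        Real.rpow_le_rpow_of_nonpos hr ?_ (by linarith)⟩
      rw [mem_closedBall_iff_norm, norm_sub_rev] at hp
      have := bdist_le_add Ω x p
      linarith
    · exact far_case hΩ hc hf hq1 hM hq hmor hβ0 hβ1 hβq' hx hy hgt hloc (hint _)
  · refine hfin _ (near_case hq1 hM hmor hβ0 hβq hxy (hint _) fun p _ => ?_)
    refine ⟨by rw [eq_univ_of_frontier ⟨x, hx⟩ hf]; trivial, ?_⟩
    -- the distance to an empty boundary is `0` by convention, so the weight is `0 ^ (β - 1)`
    have h0 : bdist Ω p = 0 := by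
      unfold bdist
      rw [not_nonempty_iff_eq_empty.1 hf, Metric.infDist_empty]
    rw [h0]
    rcases hβ1.eq_or_lt with e | e
    · simp [e]
    · rw [Real.zero_rpow (by linarith)]
      positivity
end
end
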